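/- arXiv:2003.04153 — 7 statements merged into one kernel-verified Lean document; each statement's English description precedes it below -/
import Mathlib

section
/- For every prime number p with p = 5 or 7 < p ≤ 331, there exist elements A₁, B₁, A₂, B₂, λ, μ of the finite field F_{p²} with p² elements such that: (i) for i = 1, 2 one has 4A_i³ + 27B_i² ≠ 0 and the coefficient of x^{p−1} in (x³ + A_i x + B_i)^{(p−1)/2} ∈ F_{p²}[x] is zero (i.e., the elliptic curves E_i : y² = x³ + A_i x + B_i are supersingular); (ii) μ ≠ 0 and the polynomials f₁(x) = x³ + A₁μ²x + B₁μ³ and f₂(x) = (x−λ)³ + A₂(x−λ) + B₂ of F_{p²}[x] are coprime; and (iii) the coefficients of x^{p−1}, x^{2p−1}, x^{p−2} and x^{2p−2} in (f₁·f₂)^{(p−1)/2} are all zero. (These conditions say precisely that the parameters (A₁,B₁,A₂,B₂,λ,μ,ν=1) define a superspecial Howe curve; hence there exists a superspecial Howe curve in characteristic p for every such p.) -/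
open Polynomial

namespace HoweAux

lemma coeff_eq_digit (k : ℕ) : ∀ (F : ℕ[X]) (b : ℕ), F.eval 1 < b →
    F.coeff k = F.eval b / b ^ k % b := by
  induction k with
  | zero =>
    intro F b h
    have h1 := congrArg (Polynomial.eval b) (divX_mul_X_add F)
    have h2 := congrArg (Polynomial.eval 1) (divX_mul_X_add F)
    simp only [eval_add, eval_mul, eval_X, eval_C] at h1 h2
    rw [← h1, pow_zero, Nat.div_one, Nat.mul_add_mod_self_right, Nat.mod_eq_of_lt]
    omega
  | succ k ih =>
    intro F b h
    have h1 := congrArg (Polynomial.eval b) (divX_mul_X_add F)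
    have h2 := congrArg (Polynomial.eval 1) (divX_mul_X_add F)
    simp only [eval_add, eval_mul, eval_X, eval_C] at h1 h2
    rw [← coeff_divX, ih F.divX b (by omega), pow_succ', ← Nat.div_div_eq_div_mul]
    congr 2
    rw [← h1, Nat.mul_comm, Nat.mul_add_div (by omega), Nat.div_eq_of_lt (by omega), add_zero]

/-- the `k`-th digit of `v` in base `2 ^ N` is divisible by `p` -/
def dig (p N v k : ℕ) : Bool :=
  Nat.beq (Nat.mod (Nat.mod (Nat.shiftRight v (Nat.mul N k)) (Nat.pow 2 N)) p) 0

lemma coeff_cast_zero {K : Type*} [Field K] (p : ℕ) [CharP K p] (F : ℕ[X]) (N k v w : ℕ)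
    (hw : F.eval 1 = w) (h : Nat.blt w (Nat.pow 2 N) = true)
    (hv : F.eval (Nat.pow 2 N) = v) (hd : dig p N v k = true) :
    (F.map (Nat.castRingHom K)).coeff k = 0 := by
  have h' : F.eval 1 < 2 ^ N := by
    rw [hw]; simpa [Nat.blt, Nat.succ_le_iff] using h
  have hd' := Nat.eq_of_beq_eq_true hd
  rw [coeff_map, coeff_eq_digit k F _ h']
  rw [← hv] at hd'
  have : F.eval (2 ^ N) / (2 ^ N) ^ k % 2 ^ N % p = 0 := by
    rw [← hd', ← pow_mul, ← Nat.shiftRight_eq_div_pow]; rfl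
  simpa using (CharP.cast_eq_zero_iff K p _).2 (Nat.dvd_of_mod_eq_zero this)

lemma eqMod {K : Type*} [Field K] (p : ℕ) [CharP K p] (a b : ℕ)
    (h : Nat.beq (Nat.mod a p) (Nat.mod b p) = true) : (a : K) = (b : K) :=
  (CharP.natCast_eq_natCast K p).2 (Nat.eq_of_beq_eq_true h)

lemma castMod {K : Type*} [Field K] (p : ℕ) [CharP K p] (a : ℕ) :
    ((a % p : ℕ) : K) = (a : K) :=
  (CharP.natCast_eq_natCast K p).2 (Nat.mod_mod a p)

lemma neMod {K : Type*} [Field K] (p : ℕ) [CharP K p] (a : ℕ)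
    (h : (!Nat.beq (Nat.mod a p) 0) = true) : (a : K) ≠ 0 := by
  intro h0
  rw [CharP.cast_eq_zero_iff K p] at h0
  have : Nat.mod a p = 0 := Nat.mod_eq_zero_of_dvd h0
  simp [this] at h

/-- width -/
def wid (s n : ℕ) : ℕ := Nat.mul (Nat.succ (Nat.log2 s)) n

/-- check for `x ^ 3 + a x + b` -/
def chkE (p n a b : ℕ) : Bool :=
  Nat.blt (Nat.pow (1 + a + b) n) (Nat.pow 2 (wid (1 + a + b) n)) &&
  dig p (wid (1 + a + b) n)
    (Nat.pow (Nat.pow (Nat.pow 2 (wid (1 + a + b) n)) 3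
      + a * Nat.pow 2 (wid (1 + a + b) n) + b) n) (p - 1)

lemma of_chkE {K : Type*} [Field K] (p : ℕ) [CharP K p] (a b n : ℕ)
    (h : chkE p n a b = true) :
    ((X ^ 3 + C (a : K) * X + C (b : K) : K[X]) ^ n).coeff (p - 1) = 0 := by
  simp only [chkE, Bool.and_eq_true] at h
  obtain ⟨h1, h2⟩ := h
  have := coeff_cast_zero (K := K) p ((X ^ 3 + C a * X + C b : ℕ[X]) ^ n) _ (p - 1) _ _ (by
    simp only [eval_add, eval_pow, eval_mul, eval_X, eval_C, one_pow, mul_one]; rfl) h1 (by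
    simp only [eval_add, eval_pow, eval_mul, eval_X, eval_C]; rfl) h2
  simpa using this

/-- check for the product of two cubics -/
def chkS (p n c1 c0 e2 e1 e0 N : ℕ) : Bool :=
  Nat.blt (Nat.pow ((1 + c1 + c0) * (1 + e2 + e1 + e0)) n) (Nat.pow 2 N) &&
  (fun v => dig p N v (p - 1) && (dig p N v (2 * p - 1) &&
    (dig p N v (p - 2) && dig p N v (2 * p - 2))))
    (Nat.pow ((Nat.pow (Nat.pow 2 N) 3 + c1 * Nat.pow 2 N + c0) *
     (Nat.pow (Nat.pow 2 N) 3 + e2 * Nat.pow (Nat.pow 2 N) 2 + e1 * Nat.pow 2 N + e0)) n)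

lemma of_chkS {K : Type*} [Field K] (p : ℕ) [CharP K p] (n c1 c0 e2 e1 e0 N : ℕ)
    (h : chkS p n c1 c0 e2 e1 e0 N = true) (G : K[X])
    (hG : G = (X ^ 3 + C (c1 : K) * X + C (c0 : K)) *
      (X ^ 3 + C (e2 : K) * X ^ 2 + C (e1 : K) * X + C (e0 : K))) :
    (G ^ n).coeff (p - 1) = 0 ∧ (G ^ n).coeff (2 * p - 1) = 0 ∧
    (G ^ n).coeff (p - 2) = 0 ∧ (G ^ n).coeff (2 * p - 2) = 0 := by
  simp only [chkS, Bool.and_eq_true] at h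
  obtain ⟨h1, h2⟩ := h
  have key : ∀ k, _ → (G ^ n).coeff k = 0 := fun k hk => by
    have := coeff_cast_zero (K := K) p (((X ^ 3 + C c1 * X + C c0) *
      (X ^ 3 + C e2 * X ^ 2 + C e1 * X + C e0) : ℕ[X]) ^ n) N k _ _ (by
      simp only [eval_add, eval_pow, eval_mul, eval_X, eval_C, one_pow, mul_one]; rfl) h1 (by
      simp only [eval_add, eval_pow, eval_mul, eval_X, eval_C]; rfl) hk
    rw [hG]
    simpa using this
  exact ⟨key _ h2.1, key _ h2.2.1, key _ h2.2.2.1, key _ h2.2.2.2⟩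

lemma coprime_of {K : Type*} [Field K] (c1 c0 e2 e1 e0 x0 x1 x2 y0 y1 y2 : K)
    (h5 : x2 + y2 = 0) (h4 : x1 + y1 + y2 * e2 = 0)
    (h3 : x2 * c1 + x0 + y0 + y1 * e2 + y2 * e1 = 0)
    (h2 : x2 * c0 + x1 * c1 + y0 * e2 + y1 * e1 + y2 * e0 = 0)
    (h1 : x1 * c0 + x0 * c1 + y0 * e1 + y1 * e0 = 0)
    (h0 : x0 * c0 + y0 * e0 = 1) :
    IsCoprime (X ^ 3 + C c1 * X + C c0 : K[X])
      (X ^ 3 + C e2 * X ^ 2 + C e1 * X + C e0) := by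
  refine ⟨C x2 * X ^ 2 + C x1 * X + C x0, C y2 * X ^ 2 + C y1 * X + C y0, ?_⟩
  have h5 := congrArg (C : K → K[X]) h5
  have h4 := congrArg (C : K → K[X]) h4
  have h3 := congrArg (C : K → K[X]) h3
  have h2 := congrArg (C : K → K[X]) h2
  have h1 := congrArg (C : K → K[X]) h1
  have h0 := congrArg (C : K → K[X]) h0
  simp only [C_add, C_mul, C_0, C_1] at h0 h1 h2 h3 h4 h5
  linear_combination h0 + X * h1 + X ^ 2 * h2 + X ^ 3 * h3 + X ^ 4 * h4 + X ^ 5 * h5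

/-- the claim for `p` -/
def Claim (p : ℕ) [Fact p.Prime] : Prop :=
    ∃ A₁ B₁ A₂ B₂ lam mu : GaloisField p 2,
      (4 * A₁ ^ 3 + 27 * B₁ ^ 2 ≠ 0) ∧
      (4 * A₂ ^ 3 + 27 * B₂ ^ 2 ≠ 0) ∧
      (((X ^ 3 + C A₁ * X + C B₁ : (GaloisField p 2)[X]) ^ ((p - 1) / 2)).coeff (p - 1) = 0) ∧
      (((X ^ 3 + C A₂ * X + C B₂ : (GaloisField p 2)[X]) ^ ((p - 1) / 2)).coeff (p - 1) = 0) ∧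
      mu ≠ 0 ∧
      IsCoprime
        (X ^ 3 + C (A₁ * mu ^ 2) * X + C (B₁ * mu ^ 3) : (GaloisField p 2)[X])
        ((X - C lam) ^ 3 + C A₂ * (X - C lam) + C B₂) ∧
      ((((X ^ 3 + C (A₁ * mu ^ 2) * X + C (B₁ * mu ^ 3)) *
          ((X - C lam) ^ 3 + C A₂ * (X - C lam) + C B₂) : (GaloisField p 2)[X]) ^
            ((p - 1) / 2)).coeff (p - 1) = 0) ∧
      ((((X ^ 3 + C (A₁ * mu ^ 2) * X + C (B₁ * mu ^ 3)) *
          ((X - C lam) ^ 3 + C A₂ * (X - C lam) + C B₂) : (GaloisField p 2)[X]) ^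
            ((p - 1) / 2)).coeff (2 * p - 1) = 0) ∧
      ((((X ^ 3 + C (A₁ * mu ^ 2) * X + C (B₁ * mu ^ 3)) *
          ((X - C lam) ^ 3 + C A₂ * (X - C lam) + C B₂) : (GaloisField p 2)[X]) ^
            ((p - 1) / 2)).coeff (p - 2) = 0) ∧
      ((((X ^ 3 + C (A₁ * mu ^ 2) * X + C (B₁ * mu ^ 3)) *
          ((X - C lam) ^ 3 + C A₂ * (X - C lam) + C B₂) : (GaloisField p 2)[X]) ^
            ((p - 1) / 2)).coeff (2 * p - 2) = 0)

/-- Bezout check -/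
def chkB (p c1 c0 e2 e1 e0 x0 x1 x2 y0 y1 y2 : ℕ) : Bool :=
  Nat.beq (Nat.mod (x2 + y2) p) (Nat.mod 0 p) &&
  (Nat.beq (Nat.mod (x1 + y1 + y2 * e2) p) (Nat.mod 0 p) &&
  (Nat.beq (Nat.mod (x2 * c1 + x0 + y0 + y1 * e2 + y2 * e1) p) (Nat.mod 0 p) &&
  (Nat.beq (Nat.mod (x2 * c0 + x1 * c1 + y0 * e2 + y1 * e1 + y2 * e0) p) (Nat.mod 0 p) &&
  (Nat.beq (Nat.mod (x1 * c0 + x0 * c1 + y0 * e1 + y1 * e0) p) (Nat.mod 0 p) &&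
  Nat.beq (Nat.mod (x0 * c0 + y0 * e0) p) (Nat.mod 1 p)))))

/-- discriminant check -/
def chkD (p a b : ℕ) : Bool := !Nat.beq (Nat.mod (4 * Nat.pow a 3 + 27 * Nat.pow b 2) p) 0

/-- full check for parameters in the prime field; `l` represents `-λ` -/
def chk (p a1 b1 a2 b2 l m x0 x1 x2 y0 y1 y2 : ℕ) : Bool :=
  chkD p a1 b1 && (chkD p a2 b2 && (chkE p ((p - 1) / 2) a1 b1 && (chkE p ((p - 1) / 2) a2 b2 &&
  ((!Nat.beq (Nat.mod m p) 0) &&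
  (chkB p (a1 * Nat.pow m 2 % p) (b1 * Nat.pow m 3 % p) (3 * l % p)
    ((3 * Nat.pow l 2 + a2) % p) ((Nat.pow l 3 + a2 * l + b2) % p) x0 x1 x2 y0 y1 y2 &&
  chkS p ((p - 1) / 2) (a1 * Nat.pow m 2 % p) (b1 * Nat.pow m 3 % p) (3 * l % p)
    ((3 * Nat.pow l 2 + a2) % p) ((Nat.pow l 3 + a2 * l + b2) % p)
    (wid ((1 + a1 * Nat.pow m 2 % p + b1 * Nat.pow m 3 % p) *
      (1 + 3 * l % p + (3 * Nat.pow l 2 + a2) % p + (Nat.pow l 3 + a2 * l + b2) % p))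
      ((p - 1) / 2)))))))

lemma neD {K : Type*} [Field K] (p : ℕ) [CharP K p] (a b : ℕ) (h : chkD p a b = true) :
    4 * (a : K) ^ 3 + 27 * (b : K) ^ 2 ≠ 0 := by
  have := neMod (K := K) p (4 * a ^ 3 + 27 * b ^ 2) (by simpa only [chkD, Nat.pow_eq] using h)
  simpa using this

lemma claim_of_chk (p : ℕ) [Fact p.Prime] (a1 b1 a2 b2 l m x0 x1 x2 y0 y1 y2 : ℕ)
    (h : chk p a1 b1 a2 b2 l m x0 x1 x2 y0 y1 y2 = true) : Claim p := by
  simp only [chk, Bool.and_eq_true] at h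
  obtain ⟨hD1, hD2, hE1, hE2, hm, hB, hS⟩ := h
  have q1 : (X ^ 3 + C ((a1 : GaloisField p 2) * (m : GaloisField p 2) ^ 2) * X
      + C ((b1 : GaloisField p 2) * (m : GaloisField p 2) ^ 3) : (GaloisField p 2)[X])
      = X ^ 3 + C (((a1 * Nat.pow m 2 % p : ℕ)) : GaloisField p 2) * X
        + C (((b1 * Nat.pow m 3 % p : ℕ)) : GaloisField p 2) := by
    rw [castMod, castMod]
    simp
  have q2 : ((X - C (-(l : GaloisField p 2))) ^ 3 + C (a2 : GaloisField p 2)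
        * (X - C (-(l : GaloisField p 2))) + C (b2 : GaloisField p 2) : (GaloisField p 2)[X])
      = X ^ 3 + C (((3 * l % p : ℕ)) : GaloisField p 2) * X ^ 2
        + C ((((3 * Nat.pow l 2 + a2) % p : ℕ)) : GaloisField p 2) * X
        + C ((((Nat.pow l 3 + a2 * l + b2) % p : ℕ)) : GaloisField p 2) := by
    have h3 : (C (3 : GaloisField p 2) : (GaloisField p 2)[X]) = 3 := rfl
    rw [castMod, castMod, castMod]
    simp [h3]
    ring
  refine ⟨a1, b1, a2, b2, -(l : GaloisField p 2), m, neD p _ _ hD1, neD p _ _ hD2,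
    of_chkE p _ _ _ hE1, of_chkE p _ _ _ hE2, neMod p m hm, ?_, ?_⟩
  · rw [q1, q2]
    simp only [chkB, Bool.and_eq_true] at hB
    obtain ⟨h5, h4, h3, h2, h1, h0⟩ := hB
    have h5 := eqMod (K := GaloisField p 2) p _ _ h5
    have h4 := eqMod (K := GaloisField p 2) p _ _ h4
    have h3 := eqMod (K := GaloisField p 2) p _ _ h3
    have h2 := eqMod (K := GaloisField p 2) p _ _ h2
    have h1 := eqMod (K := GaloisField p 2) p _ _ h1
    have h0 := eqMod (K := GaloisField p 2) p _ _ h0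
    rw [Nat.cast_zero] at h1 h2 h3 h4 h5
    rw [Nat.cast_one] at h0
    refine coprime_of _ _ _ _ _ (x0 : GaloisField p 2) x1 x2 y0 y1 y2
      ?_ ?_ ?_ ?_ ?_ ?_
    · exact_mod_cast h5
    · exact_mod_cast h4
    · exact_mod_cast h3
    · exact_mod_cast h2
    · exact_mod_cast h1
    · exact_mod_cast h0
  · exact of_chkS p _ _ _ _ _ _ _ hS _ (by rw [q1, q2])

/-- powers in `R[√d]`, as pairs -/
def pp {R : Type*} [CommSemiring R] (d u v : R) : ℕ → R → R → R × R
  | 0, a, b => (a, b)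
  | n + 1, a, b => pp d u v n (a * u + d * (b * v)) (a * v + b * u)

lemma pp_hom {R S : Type*} [CommSemiring R] [CommSemiring S] (φ : R →+* S) (d u v : R) (n : ℕ) :
    ∀ a b, pp (φ d) (φ u) (φ v) n (φ a) (φ b) =
      (φ (pp d u v n a b).1, φ (pp d u v n a b).2) := by
  induction n with
  | zero => intro a b; rfl
  | succ n ih =>
    intro a b
    simp only [pp, ← ih, map_add, map_mul]

lemma pp_eq {R : Type*} [CommSemiring R] (d u v t : R) (ht : t * t = d) (n : ℕ) :
    ∀ a b, (pp d u v n a b).1 + t * (pp d u v n a b).2 = (a + t * b) * (u + t * v) ^ n := by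
  subst ht
  induction n with
  | zero => intro a b; simp [pp]
  | succ n ih =>
    intro a b
    simp only [pp, ih, pow_succ']
    ring

/-- power of a product of two cubics over `R[√d]` -/
def pv {R : Type*} [CommSemiring R] (n d : ℕ) (c1 c0 e2 e1 e0 : ℕ × ℕ) (x : R) : R × R :=
  pp (d : R)
    ((x ^ 3 + c1.1 * x + c0.1) * (x ^ 3 + e2.1 * x ^ 2 + e1.1 * x + e0.1)
      + d * ((c1.2 * x + c0.2) * (e2.2 * x ^ 2 + e1.2 * x + e0.2)))
    ((x ^ 3 + c1.1 * x + c0.1) * (e2.2 * x ^ 2 + e1.2 * x + e0.2)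
      + (c1.2 * x + c0.2) * (x ^ 3 + e2.1 * x ^ 2 + e1.1 * x + e0.1)) n 1 0

lemma pv_hom {R S : Type*} [CommSemiring R] [CommSemiring S] (φ : R →+* S)
    (n d : ℕ) (c1 c0 e2 e1 e0 : ℕ × ℕ) (x : R) :
    pv n d c1 c0 e2 e1 e0 (φ x) =
      (φ (pv n d c1 c0 e2 e1 e0 x).1, φ (pv n d c1 c0 e2 e1 e0 x).2) := by
  unfold pv
  rw [← pp_hom]
  simp only [map_add, map_mul, map_pow, map_natCast, map_one, map_zero]

/-- coefficient check for pairs -/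
def chkP (p N : ℕ) (one v : ℕ × ℕ) (k : ℕ) : Bool :=
  Nat.blt one.1 (Nat.pow 2 N) && (Nat.blt one.2 (Nat.pow 2 N) && (dig p N v.1 k && dig p N v.2 k))

lemma of_chkP {K : Type*} [Field K] (p : ℕ) [CharP K p] (n d N k : ℕ) (t : K) (ht : t * t = d)
    (c1 c0 e2 e1 e0 : ℕ × ℕ)
    (h : chkP p N (pv n d c1 c0 e2 e1 e0 1) (pv n d c1 c0 e2 e1 e0 (Nat.pow 2 N)) k = true) :
    (((X ^ 3 + C (c1.1 + t * c1.2 : K) * X + C (c0.1 + t * c0.2 : K)) *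
      (X ^ 3 + C (e2.1 + t * e2.2 : K) * X ^ 2 + C (e1.1 + t * e1.2 : K) * X
        + C (e0.1 + t * e0.2 : K))) ^ n).coeff k = 0 := by
  simp only [chkP, Bool.and_eq_true] at h
  obtain ⟨h1, h2, h3, h4⟩ := h
  have E := fun y : ℕ => pv_hom (evalRingHom y) n d c1 c0 e2 e1 e0 (X : ℕ[X])
  simp only [coe_evalRingHom, eval_X] at E
  have M := pv_hom (mapRingHom (Nat.castRingHom K)) n d c1 c0 e2 e1 e0 (X : ℕ[X])
  simp only [coe_mapRingHom, map_X] at M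
  have r1 := coeff_cast_zero (K := K) p (pv n d c1 c0 e2 e1 e0 (X : ℕ[X])).1 N k _ _
    (congrArg Prod.fst (E 1)).symm h1 (congrArg Prod.fst (E _)).symm h3
  have r2 := coeff_cast_zero (K := K) p (pv n d c1 c0 e2 e1 e0 (X : ℕ[X])).2 N k _ _
    (congrArg Prod.snd (E 1)).symm h2 (congrArg Prod.snd (E _)).symm h4
  have ht' : (C t * C t : K[X]) = (d : K[X]) := by rw [← C_mul, ht]; simp
  have Q : (pv n d c1 c0 e2 e1 e0 (X : K[X])).1 + C t * (pv n d c1 c0 e2 e1 e0 (X : K[X])).2 = _ :=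
    pp_eq (d : K[X]) _ _ (C t) ht' n 1 0
  rw [M] at Q
  have Q2 := congrArg (fun F : K[X] => F.coeff k) Q
  simp only [coeff_add, coeff_C_mul, r1, r2, mul_zero, add_zero, one_mul] at Q2
  rw [Q2]
  congr 2
  simp only [C_add, C_mul, C_eq_natCast, ← ht']
  ring

/-- divisibility by `p` in `ℤ√d` -/
def Zm (p : ℕ) {d : ℤ} (z : ℤ√d) : Prop := z.re % (p : ℤ) = 0 ∧ z.im % (p : ℤ) = 0

/-- pair to element of `ℤ√d` -/
def zz (d : ℕ) (c : ℕ × ℕ) : ℤ√(d : ℤ) := ⟨c.1, c.2⟩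

lemma claim_pair (p : ℕ) [Fact p.Prime] (d : ℕ) (t : GaloisField p 2) (ht : t * t = d)
    (a1 b1 a2 b2 N : ℕ) (l m w c1 c0 e2 e1 e0 x0 x1 x2 y0 y1 y2 : ℕ × ℕ)
    (hD1 : chkD p a1 b1 = true) (hD2 : chkD p a2 b2 = true)
    (hE1 : chkE p ((p - 1) / 2) a1 b1 = true) (hE2 : chkE p ((p - 1) / 2) a2 b2 = true)
    (hm : Zm p (zz d m * zz d w - 1))
    (hc1 : Zm p ((a1 : ℤ√(d : ℤ)) * zz d m ^ 2 - zz d c1)) (hc0 : Zm p ((b1 : ℤ√(d : ℤ)) * zz d m ^ 3 - zz d c0))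
    (he2 : Zm p (3 * zz d l - zz d e2)) (he1 : Zm p (3 * zz d l ^ 2 + (a2 : ℤ√(d : ℤ)) - zz d e1))
    (he0 : Zm p (zz d l ^ 3 + (a2 : ℤ√(d : ℤ)) * zz d l + (b2 : ℤ√(d : ℤ)) - zz d e0))
    (h5 : Zm p (zz d x2 + zz d y2)) (h4 : Zm p (zz d x1 + zz d y1 + zz d y2 * zz d e2))
    (h3 : Zm p (zz d x2 * zz d c1 + zz d x0 + zz d y0 + zz d y1 * zz d e2 + zz d y2 * zz d e1))
    (h2 : Zm p (zz d x2 * zz d c0 + zz d x1 * zz d c1 + zz d y0 * zz d e2 + zz d y1 * zz d e1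
      + zz d y2 * zz d e0))
    (h1 : Zm p (zz d x1 * zz d c0 + zz d x0 * zz d c1 + zz d y0 * zz d e1 + zz d y1 * zz d e0))
    (h0 : Zm p (zz d x0 * zz d c0 + zz d y0 * zz d e0 - 1))
    (hk : ∀ k ∈ [p - 1, 2 * p - 1, p - 2, 2 * p - 2],
      chkP p N (pv ((p - 1) / 2) d c1 c0 e2 e1 e0 1)
        (pv ((p - 1) / 2) d c1 c0 e2 e1 e0 (Nat.pow 2 N)) k = true) : Claim p := by
  let φ : ℤ√(d : ℤ) →+* GaloisField p 2 := Zsqrtd.lift ⟨t, by rw [ht]; simp⟩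
  have hφ : ∀ z, φ z = z.re + z.im * t := fun z => rfl
  have hz : ∀ c, φ (zz d c) = c.1 + t * c.2 := fun c => by
    rw [hφ]; simp [zz, mul_comm]
  have h00 : ∀ z, Zm p z → φ z = 0 := fun z hz => by
    rw [hφ, (CharP.intCast_eq_zero_iff (GaloisField p 2) p _).2 (Int.dvd_of_emod_eq_zero hz.1),
      (CharP.intCast_eq_zero_iff (GaloisField p 2) p _).2 (Int.dvd_of_emod_eq_zero hz.2)]
    simp
  replace hm := h00 _ hm
  replace hc1 := h00 _ hc1
  replace hc0 := h00 _ hc0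
  replace he2 := h00 _ he2
  replace he1 := h00 _ he1
  replace he0 := h00 _ he0
  replace h5 := h00 _ h5
  replace h4 := h00 _ h4
  replace h3 := h00 _ h3
  replace h2 := h00 _ h2
  replace h1 := h00 _ h1
  replace h0 := h00 _ h0
  simp only [map_add, map_sub, map_mul, map_pow, map_natCast, map_ofNat, map_one, sub_eq_zero]
    at hm hc1 hc0 he2 he1 he0 h5 h4 h3 h2 h1 h0
  have q2 : ((X - C (-φ (zz d l))) ^ 3 + C (a2 : GaloisField p 2)
        * (X - C (-φ (zz d l))) + C (b2 : GaloisField p 2) : (GaloisField p 2)[X])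
      = X ^ 3 + C (φ (zz d e2)) * X ^ 2 + C (φ (zz d e1)) * X + C (φ (zz d e0)) := by
    have h3 : (C (3 : GaloisField p 2) : (GaloisField p 2)[X]) = 3 := rfl
    rw [← he2, ← he1, ← he0]
    simp only [C_neg, C_add, C_mul, C_pow, h3]
    ring
  refine ⟨a1, b1, a2, b2, -φ (zz d l), φ (zz d m), neD p _ _ hD1, neD p _ _ hD2,
    of_chkE p _ _ _ hE1, of_chkE p _ _ _ hE2, fun h => by simp [h] at hm, ?_, ?_⟩
  · rw [hc1, hc0, q2]
    exact coprime_of _ _ _ _ _ _ _ _ _ _ _ h5 h4 h3 h2 h1 h0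
  · rw [hc1, hc0, q2]
    have key := fun k hk' => of_chkP (K := GaloisField p 2) p _ d N k t ht c1 c0 e2 e1 e0 (hk k hk')
    simp only [← hz] at key
    exact ⟨key _ (by simp), key _ (by simp), key _ (by simp), key _ (by simp)⟩

lemma exists_sqrt (p : ℕ) [Fact p.Prime] (hp : p ≠ 2) (d : ℕ) (hd : ¬ p ∣ d)
    (h : d ^ (p ^ 2 / 2) % p = 1 % p) : ∃ t : GaloisField p 2, t * t = d := by
  have : Fintype (GaloisField p 2) := Fintype.ofFinite _
  have hc : Fintype.card (GaloisField p 2) = p ^ 2 := by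
    rw [← Nat.card_eq_fintype_card, GaloisField.card p 2 (by norm_num)]
  have h1 : ((d : GaloisField p 2)) ≠ 0 := by
    rwa [Ne, CharP.cast_eq_zero_iff (GaloisField p 2) p]
  have h2 : ringChar (GaloisField p 2) ≠ 2 := by
    rwa [ringChar.eq (GaloisField p 2) p]
  obtain ⟨t, ht⟩ := (FiniteField.isSquare_iff h2 h1).2 (by
    rw [hc]
    exact_mod_cast (CharP.natCast_eq_natCast (GaloisField p 2) p).2 h)
  exact ⟨t, ht.symm⟩

/-- the parameters over the prime fields -/
def table : List (List ℕ) := [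
  [5, 0, 1, 0, 1, 0, 4, 2, 0, 0, 3, 0, 0],
  [11, 0, 1, 0, 1, 0, 5, 4, 0, 0, 7, 0, 0],
  [13, 9, 9, 9, 9, 10, 5, 4, 12, 2, 11, 9, 11],
  [17, 0, 1, 0, 1, 0, 4, 10, 0, 0, 7, 0, 0],
  [23, 0, 1, 0, 1, 0, 3, 8, 0, 0, 15, 0, 0],
  [29, 0, 1, 0, 1, 0, 7, 24, 0, 0, 5, 0, 0],
  [31, 21, 21, 21, 21, 23, 7, 25, 14, 0, 11, 17, 0],
  [41, 0, 1, 0, 1, 0, 6, 37, 0, 0, 4, 0, 0],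
  [43, 18, 18, 18, 18, 28, 8, 38, 37, 7, 1, 35, 36],
  [47, 0, 1, 0, 1, 0, 2, 27, 0, 0, 20, 0, 0],
  [53, 0, 1, 0, 1, 0, 6, 18, 0, 0, 35, 0, 0],
  [59, 0, 1, 0, 1, 0, 4, 15, 0, 0, 44, 0, 0],
  [61, 4, 4, 4, 4, 31, 26, 50, 53, 7, 29, 49, 54],
  [67, 25, 25, 25, 25, 63, 32, 59, 0, 57, 41, 53, 10],
  [71, 0, 1, 0, 1, 49, 3, 48, 17, 48, 18, 10, 23],
  [73, 19, 19, 33, 33, 23, 7, 42, 70, 46, 49, 38, 27],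
  [79, 19, 19, 19, 19, 49, 1, 42, 6, 31, 51, 48, 48],
  [83, 0, 1, 0, 1, 0, 10, 28, 0, 0, 55, 0, 0],
  [89, 0, 1, 0, 1, 0, 8, 58, 0, 0, 31, 0, 0],
  [97, 29, 29, 29, 29, 82, 60, 26, 12, 2, 34, 92, 95],
  [101, 0, 1, 0, 1, 0, 6, 70, 0, 0, 31, 0, 0],
  [103, 36, 36, 36, 36, 10, 46, 70, 58, 96, 57, 41, 7],
  [107, 0, 1, 0, 1, 0, 3, 70, 0, 0, 37, 0, 0],
  [109, 31, 31, 31, 31, 46, 7, 33, 33, 83, 89, 85, 26],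
  [113, 0, 1, 0, 1, 0, 7, 38, 0, 0, 75, 0, 0],
  [127, 12, 12, 12, 12, 67, 3, 4, 82, 125, 53, 24, 2],
  [131, 0, 1, 0, 1, 0, 3, 126, 0, 0, 5, 0, 0],
  [137, 0, 1, 0, 1, 124, 5, 36, 44, 104, 63, 10, 33],
  [139, 62, 62, 62, 62, 25, 54, 1, 133, 54, 37, 25, 85],
  [149, 0, 1, 0, 1, 123, 8, 5, 33, 40, 124, 125, 109],
  [151, 16, 16, 16, 16, 132, 48, 90, 62, 112, 70, 47, 39],
  [157, 46, 46, 46, 46, 120, 46, 58, 95, 89, 73, 74, 68],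
  [163, 14, 14, 14, 14, 80, 13, 93, 81, 122, 32, 22, 41],
  [167, 0, 1, 0, 1, 0, 11, 139, 0, 0, 28, 0, 0],
  [173, 0, 1, 0, 1, 0, 3, 20, 0, 0, 153, 0, 0],
  [179, 0, 1, 0, 1, 57, 7, 39, 50, 164, 22, 70, 15],
  [181, 2, 2, 2, 2, 48, 24, 141, 6, 7, 161, 97, 174],
  [191, 0, 1, 0, 1, 0, 14, 36, 0, 0, 155, 0, 0],
  [193, 105, 105, 125, 125, 27, 179, 9, 161, 170, 81, 99, 23],
  [197, 0, 1, 0, 1, 0, 2, 169, 0, 0, 28, 0, 0],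
  [199, 6, 6, 6, 6, 31, 198, 100, 21, 189, 12, 44, 10],
  [211, 71, 71, 71, 71, 15, 9, 89, 104, 19, 153, 118, 192],
  [223, 5, 5, 5, 5, 113, 35, 109, 145, 94, 115, 55, 129],
  [227, 0, 1, 0, 1, 0, 7, 152, 0, 0, 75, 0, 0],
  [229, 41, 41, 41, 41, 80, 4, 196, 140, 44, 123, 115, 185],
  [233, 0, 1, 0, 1, 0, 9, 225, 0, 0, 8, 0, 0],
  [239, 0, 1, 0, 1, 214, 1, 201, 3, 150, 158, 219, 89],
  [241, 44, 44, 44, 44, 175, 21, 180, 167, 180, 153, 102, 61],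
  [251, 0, 1, 0, 1, 0, 4, 4, 0, 0, 247, 0, 0],
  [257, 0, 1, 0, 1, 104, 7, 215, 15, 202, 160, 44, 55],
  [263, 0, 1, 0, 1, 72, 7, 203, 245, 126, 239, 145, 137],
  [269, 0, 1, 0, 1, 0, 6, 264, 0, 0, 5, 0, 0],
  [271, 7, 7, 7, 7, 16, 58, 173, 106, 208, 229, 122, 63],
  [277, 67, 67, 67, 67, 207, 19, 159, 215, 7, 260, 254, 270],
  [281, 0, 1, 0, 1, 0, 13, 27, 0, 0, 254, 0, 0],
  [283, 104, 104, 104, 104, 282, 11, 240, 58, 18, 106, 171, 265],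
  [293, 0, 1, 0, 1, 0, 9, 130, 0, 0, 163, 0, 0],
  [307, 160, 160, 160, 160, 63, 80, 277, 1, 80, 127, 76, 227],
  [311, 0, 1, 0, 1, 0, 8, 14, 0, 0, 297, 0, 0],
  [313, 103, 103, 103, 103, 63, 59, 149, 212, 181, 218, 193, 132],
  [317, 0, 1, 0, 1, 0, 17, 105, 0, 0, 212, 0, 0],
  [331, 42, 42, 42, 42, 144, 64, 267, 119, 215, 307, 81, 116]]

/-- check a row -/
def chkRow (q : ℕ) : List ℕ → Bool
  | [p, a1, b1, a2, b2, l, m, x0, x1, x2, y0, y1, y2] =>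
    Nat.beq p q && chk q a1 b1 a2 b2 l m x0 x1 x2 y0 y1 y2
  | _ => false

lemma claim_of_chkRow (p : ℕ) [Fact p.Prime] (r : List ℕ) (h : chkRow p r = true) : Claim p := by
  unfold chkRow at h
  split at h
  · rw [Bool.and_eq_true] at h
    exact claim_of_chk p _ _ _ _ _ _ _ _ _ _ _ _ h.2
  · simp at h

/-- composite numbers have a small proper divisor -/
def comp (q : ℕ) : Bool :=
  [2, 3, 5, 7, 11, 13, 17].any fun r => Nat.blt r q && Nat.beq (Nat.mod q r) 0

lemma not_comp (p : ℕ) (hp : p.Prime) : comp p = false := by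
  rw [Bool.eq_false_iff]
  intro h
  obtain ⟨r, hr, h⟩ := List.any_eq_true.1 h
  rw [Bool.and_eq_true] at h
  have h1 : r < p := by simpa [Nat.blt, Nat.succ_le_iff] using h.1
  have h2 : r ∣ p := Nat.dvd_of_mod_eq_zero (Nat.eq_of_beq_eq_true h.2)
  rcases (Nat.dvd_prime hp).1 h2 with h3 | h3
  · subst h3; simp at hr
  · omega

lemma all_checked : (List.range 332).all (fun q => Nat.ble q 4 || (Nat.beq q 6 || (Nat.beq q 7 ||
    (Nat.beq q 19 || (Nat.beq q 37 || (comp q || table.any (chkRow q))))))) = true := by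
  decide +kernel

lemma claim_19 [Fact (Nat.Prime 19)] : Claim 19 := by
  obtain ⟨t, ht⟩ := exists_sqrt 19 (by norm_num) 2 (by norm_num) (by decide +kernel)
  refine claim_pair 19 2 t ht 3 3 3 3 216 (16, 16) (3, 2) (3, 17) (13, 17) (12, 1) (10, 10) (8, 16) (14, 8)
    (8, 11) (15, 11) (10, 11) (15, 14) (1, 9) (9, 8) ?_ ?_ ?_ ?_ ?_ ?_ ?_ ?_ ?_ ?_ ?_ ?_ ?_ ?_ ?_ ?_ ?_
  all_goals first | decide +kernel | (constructor <;> decide +kernel)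

lemma claim_37 [Fact (Nat.Prime 37)] : Claim 37 := by
  obtain ⟨t, ht⟩ := exists_sqrt 37 (by norm_num) 2 (by norm_num) (by decide +kernel)
  refine claim_pair 37 2 t ht 3 3 3 3 432 (1, 1) (2, 11) (23, 3) (35, 21) (14, 20) (3, 3) (12, 6) (13, 8)
    (0, 20) (32, 15) (24, 15) (31, 22) (19, 28) (13, 22) ?_ ?_ ?_ ?_ ?_ ?_ ?_ ?_ ?_ ?_ ?_ ?_ ?_ ?_ ?_ ?_ ?_
  all_goals first | decide +kernel | (constructor <;> decide +kernel)

end HoweAux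

/-- **Theorem 1.1** (Kudo–Harashita): for every prime `p` with `p = 5` or `7 < p ≤ 331`,
there exists a superspecial Howe curve in characteristic `p`.  This is expressed via the
existence of parameters `A₁, B₁, A₂, B₂, λ, μ ∈ 𝔽_{p²}` (with `ν = 1`) such that the two
elliptic curves `y² = x³ + Aᵢx + Bᵢ` are supersingular (Deuring/Cartier–Manin criterion),
`(λ, μ, 1)` is of Howe type, and the four Cartier–Manin entries of the associated genus-2
curve `u² = f₁(x)f₂(x)` vanish. -/
theorem exists_superspecial_howe_curve (p : ℕ) [Fact p.Prime]
    (hp : p = 5 ∨ (7 < p ∧ p ≤ 331)) :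
    ∃ A₁ B₁ A₂ B₂ lam mu : GaloisField p 2,
      (4 * A₁ ^ 3 + 27 * B₁ ^ 2 ≠ 0) ∧
      (4 * A₂ ^ 3 + 27 * B₂ ^ 2 ≠ 0) ∧
      (((X ^ 3 + C A₁ * X + C B₁ : (GaloisField p 2)[X]) ^ ((p - 1) / 2)).coeff (p - 1) = 0) ∧
      (((X ^ 3 + C A₂ * X + C B₂ : (GaloisField p 2)[X]) ^ ((p - 1) / 2)).coeff (p - 1) = 0) ∧
      mu ≠ 0 ∧
      IsCoprime
        (X ^ 3 + C (A₁ * mu ^ 2) * X + C (B₁ * mu ^ 3) : (GaloisField p 2)[X])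
        ((X - C lam) ^ 3 + C A₂ * (X - C lam) + C B₂) ∧
      ((((X ^ 3 + C (A₁ * mu ^ 2) * X + C (B₁ * mu ^ 3)) *
          ((X - C lam) ^ 3 + C A₂ * (X - C lam) + C B₂) : (GaloisField p 2)[X]) ^
            ((p - 1) / 2)).coeff (p - 1) = 0) ∧
      ((((X ^ 3 + C (A₁ * mu ^ 2) * X + C (B₁ * mu ^ 3)) *
          ((X - C lam) ^ 3 + C A₂ * (X - C lam) + C B₂) : (GaloisField p 2)[X]) ^
            ((p - 1) / 2)).coeff (2 * p - 1) = 0) ∧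
      ((((X ^ 3 + C (A₁ * mu ^ 2) * X + C (B₁ * mu ^ 3)) *
          ((X - C lam) ^ 3 + C A₂ * (X - C lam) + C B₂) : (GaloisField p 2)[X]) ^
            ((p - 1) / 2)).coeff (p - 2) = 0) ∧
      ((((X ^ 3 + C (A₁ * mu ^ 2) * X + C (B₁ * mu ^ 3)) *
          ((X - C lam) ^ 3 + C A₂ * (X - C lam) + C B₂) : (GaloisField p 2)[X]) ^
            ((p - 1) / 2)).coeff (2 * p - 2) = 0) := by
  have hP : p.Prime := Fact.out
  change HoweAux.Claim p
  have h := List.all_eq_true.1 HoweAux.all_checked p (by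
    rw [List.mem_range]; omega)
  simp only [Bool.or_eq_true, HoweAux.not_comp p hP, Bool.false_eq_true, false_or] at h
  rcases h with h | h | h | h | h | h
  · have := Nat.le_of_ble_eq_true h
    omega
  · have := Nat.eq_of_beq_eq_true h
    omega
  · have := Nat.eq_of_beq_eq_true h
    omega
  · have := Nat.eq_of_beq_eq_true h
    subst this
    exact HoweAux.claim_19
  · have := Nat.eq_of_beq_eq_true h
    subst this
    exact HoweAux.claim_37
  · obtain ⟨r, _, hr⟩ := List.any_eq_true.1 h
    exact HoweAux.claim_of_chkRow p r hr
end

section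
/- Lemma 2.3(1): Suppose that for i = 1, 2 the coefficient of x^{p−1} in (x³ + A_i x + B_i)^{(p−1)/2} ∈ k[x] is zero (i.e., E₁ and E₂ are supersingular). Then the degree of a = γ_{p−1} ∈ k[λ,μ,ν] in each of the variables λ, μ and ν is at most (3p−5)/2. -/
/-- The polynomial `f = f₁ · f₂ ∈ k[λ,μ,ν][x]`, where `λ = X 0`, `μ = X 1`, `ν = X 2` are
indeterminates, `f₁(x) = x³ + A₁μ²x + B₁μ³` and `f₂(x) = (x−λ)³ + A₂ν²(x−λ) + B₂ν³`. -/
noncomputable def howeF {k : Type*} [CommRing k] (A₁ B₁ A₂ B₂ : k) :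
    Polynomial (MvPolynomial (Fin 3) k) :=
  (Polynomial.X ^ 3
      + Polynomial.C (MvPolynomial.C A₁ * MvPolynomial.X 1 ^ 2) * Polynomial.X
      + Polynomial.C (MvPolynomial.C B₁ * MvPolynomial.X 1 ^ 3)) *
  ((Polynomial.X - Polynomial.C (MvPolynomial.X 0)) ^ 3
      + Polynomial.C (MvPolynomial.C A₂ * MvPolynomial.X 2 ^ 2)
          * (Polynomial.X - Polynomial.C (MvPolynomial.X 0))
      + Polynomial.C (MvPolynomial.C B₂ * MvPolynomial.X 2 ^ 3))

/-- `γ_i ∈ k[λ,μ,ν]`, the coefficient of `x^i` in `f^((p−1)/2)`. -/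
noncomputable def howeGamma {k : Type*} [CommRing k] (A₁ B₁ A₂ B₂ : k) (p i : ℕ) :
    MvPolynomial (Fin 3) k :=
  ((howeF A₁ B₁ A₂ B₂) ^ ((p - 1) / 2)).coeff i

open Polynomial in
theorem aux_scale_pow {R : Type*} [CommRing R] [IsDomain R] (g : R[X]) (s : R) (m : ℕ) :
    (g ^ m).scaleRoots s = (g.scaleRoots s) ^ m := by
  induction m with
  | zero => simp
  | succ n ih => rw [pow_succ, mul_scaleRoots_of_noZeroDivisors, ih, pow_succ]

open Polynomial in
theorem aux_deg {k : Type*} [Field k] (A B : k) :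
    (X ^ 3 + C A * X + C B : k[X]).natDegree = 3 := by
  compute_degree!

open Polynomial in
theorem aux_coeff {k : Type*} [Field k] (A B : k) (t : Fin 3) (m i : ℕ) :
    ((X ^ 3 + C (MvPolynomial.C A * MvPolynomial.X t ^ 2) * X
      + C (MvPolynomial.C B * MvPolynomial.X t ^ 3) :
        Polynomial (MvPolynomial (Fin 3) k)) ^ m).coeff i
    = MvPolynomial.C (((X ^ 3 + C A * X + C B : k[X]) ^ m).coeff i)
      * MvPolynomial.X t ^ (3 * m - i) := by
  have hinj := MvPolynomial.C_injective (Fin 3) k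
  have h : (X ^ 3 + C (MvPolynomial.C A * MvPolynomial.X t ^ 2) * X
      + C (MvPolynomial.C B * MvPolynomial.X t ^ 3) : Polynomial (MvPolynomial (Fin 3) k))
      = ((X ^ 3 + C A * X + C B : k[X]).map MvPolynomial.C).scaleRoots (MvPolynomial.X t) := by
    ext1 n
    rw [coeff_scaleRoots, natDegree_map_eq_of_injective hinj, aux_deg, coeff_map]
    rcases n with _ | _ | _ | _ | n <;> simp only [coeff_add, coeff_C_mul, coeff_X, coeff_C, coeff_X_pow] <;> simp
  rw [h, ← aux_scale_pow, coeff_scaleRoots, ← Polynomial.map_pow,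
    natDegree_map_eq_of_injective hinj, coeff_map, natDegree_pow, aux_deg, mul_comm m 3]

theorem aux_degreeOf {k : Type*} [Field k] (c : k) (u v w : ℕ) (t : Fin 3) :
    MvPolynomial.degreeOf t (MvPolynomial.C c * MvPolynomial.X 0 ^ u * MvPolynomial.X 1 ^ v
      * MvPolynomial.X 2 ^ w : MvPolynomial (Fin 3) k) ≤ ![u, v, w] t := by
  refine (MvPolynomial.degreeOf_mul_le _ _ _).trans ?_
  refine (Nat.add_le_add_right (MvPolynomial.degreeOf_mul_le _ _ _) _).trans ?_
  refine (Nat.add_le_add_right (Nat.add_le_add_right (MvPolynomial.degreeOf_mul_le _ _ _) _) _).trans ?_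
  have h : ∀ (s : Fin 3) (n : ℕ), MvPolynomial.degreeOf t (MvPolynomial.X s ^ n :
      MvPolynomial (Fin 3) k) ≤ n * (if t = s then 1 else 0) := fun s n => by
    refine (MvPolynomial.degreeOf_pow_le _ _ _).trans ?_
    rw [MvPolynomial.degreeOf_X]
  have h0 := h 0 u
  have h1 := h 1 v
  have h2 := h 2 w
  rw [MvPolynomial.degreeOf_C]
  fin_cases t <;> simp at h0 h1 h2 ⊢ <;> omega

open Polynomial in
theorem aux_coeff2 {k : Type*} [Field k] (A B : k) (m b : ℕ) :
    (((X - C (MvPolynomial.X 0)) ^ 3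
      + C (MvPolynomial.C A * MvPolynomial.X 2 ^ 2) * (X - C (MvPolynomial.X 0))
      + C (MvPolynomial.C B * MvPolynomial.X 2 ^ 3) :
        Polynomial (MvPolynomial (Fin 3) k)) ^ m).coeff b
    = ∑ j ∈ Finset.range (3 * m + 1),
      MvPolynomial.C (((X ^ 3 + C A * X + C B : k[X]) ^ m).coeff j
        * (-1) ^ (j - b) * (j.choose b : k))
      * MvPolynomial.X 0 ^ (j - b) * MvPolynomial.X 2 ^ (3 * m - j) := by
  set G : Polynomial (MvPolynomial (Fin 3) k) := X ^ 3
      + C (MvPolynomial.C A * MvPolynomial.X 2 ^ 2) * X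
      + C (MvPolynomial.C B * MvPolynomial.X 2 ^ 3) with hG
  have hd : (G ^ m).natDegree < 3 * m + 1 := by
    have : G.natDegree ≤ 3 := by rw [hG]; compute_degree
    have := natDegree_pow_le_of_le m this
    omega
  have h : ((X - C (MvPolynomial.X 0)) ^ 3
      + C (MvPolynomial.C A * MvPolynomial.X 2 ^ 2) * (X - C (MvPolynomial.X 0))
      + C (MvPolynomial.C B * MvPolynomial.X 2 ^ 3) :
        Polynomial (MvPolynomial (Fin 3) k)) ^ m = (G ^ m).comp (X + C (-MvPolynomial.X 0)) := by
    rw [pow_comp]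
    simp only [hG, add_comp, mul_comp, pow_comp, X_comp, C_comp, C_neg, ← sub_eq_add_neg]
  rw [h, Polynomial.comp, eval₂_eq_sum_range' _ hd, finsetSum_coeff]
  refine Finset.sum_congr rfl fun j _ => ?_
  rw [coeff_C_mul, coeff_X_add_C_pow, hG, aux_coeff, neg_pow]
  simp only [map_mul, map_pow, map_neg, map_one, map_natCast]
  ring

/-- **Lemma 2.3(1)**: if `E₁` and `E₂` are supersingular, then the degree of
`a = γ_{p−1}` in each of the variables `λ, μ, ν` is at most `(3p−5)/2`. -/
theorem degree_a_le (p : ℕ) (hp : p.Prime) (hp3 : 3 < p)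
    (k : Type*) [Field k] [CharP k p] (A₁ B₁ A₂ B₂ : k)
    (hΔ₁ : 4 * A₁ ^ 3 + 27 * B₁ ^ 2 ≠ 0) (hΔ₂ : 4 * A₂ ^ 3 + 27 * B₂ ^ 2 ≠ 0)
    (hss₁ : ((Polynomial.X ^ 3 + Polynomial.C A₁ * Polynomial.X + Polynomial.C B₁ :
        Polynomial k) ^ ((p - 1) / 2)).coeff (p - 1) = 0)
    (hss₂ : ((Polynomial.X ^ 3 + Polynomial.C A₂ * Polynomial.X + Polynomial.C B₂ :
        Polynomial k) ^ ((p - 1) / 2)).coeff (p - 1) = 0) :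
    ∀ j : Fin 3,
      MvPolynomial.degreeOf j (howeGamma A₁ B₁ A₂ B₂ p (p - 1)) ≤ (3 * p - 5) / 2 := by
  obtain ⟨m, hm⟩ : ∃ m, p = 2 * m + 1 := by
    rcases hp.eq_two_or_odd' with h | h
    · omega
    · exact h
  have e1 : (p - 1) / 2 = m := by omega
  have e2 : p - 1 = 2 * m := by omega
  have e3 : (3 * p - 5) / 2 = 3 * m - 1 := by omega
  intro t
  rw [howeGamma, howeF, mul_pow, Polynomial.coeff_mul, e3, e1, e2]
  rw [e1, e2] at hss₁ hss₂
  refine (MvPolynomial.degreeOf_sum_le _ _ _).trans (Finset.sup_le ?_)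
  rintro ⟨a, b⟩ hab
  rw [Finset.HasAntidiagonal.mem_antidiagonal] at hab
  simp only at hab ⊢
  rw [aux_coeff, aux_coeff2, Finset.mul_sum]
  refine (MvPolynomial.degreeOf_sum_le _ _ _).trans (Finset.sup_le ?_)
  intro j hj
  rw [Finset.mem_range] at hj
  set α := ((Polynomial.X ^ 3 + Polynomial.C A₁ * Polynomial.X + Polynomial.C B₁ :
        Polynomial k) ^ m).coeff with hα
  set β := ((Polynomial.X ^ 3 + Polynomial.C A₂ * Polynomial.X + Polynomial.C B₂ :
        Polynomial k) ^ m).coeff with hβ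
  have key : (α a * (β j * (-1) ^ (j - b) * (j.choose b : k)) = 0) ∨
      (1 ≤ a ∧ a < 2 * m ∧ b ≤ j ∧ 1 ≤ j) := by
    by_cases h1 : a = 2 * m
    · left; rw [h1, hss₁, zero_mul]
    by_cases h2 : j < b
    · left; rw [Nat.choose_eq_zero_of_lt h2]; simp
    by_cases h3 : a = 0
    · left
      have hb : b = 2 * m := by omega
      by_cases h4 : j = 2 * m
      · rw [h4, hss₂]; simp
      · have : (j.choose b : k) = 0 := by
          rw [CharP.cast_eq_zero_iff k p]
          obtain ⟨r, rfl⟩ : ∃ r, j = p + r := ⟨j - p, by omega⟩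
          haveI := Fact.mk hp
          have hL := Choose.choose_modEq_choose_mod_mul_choose_div_nat (n := p + r) (k := b) (p := p)
          rw [← Nat.modEq_zero_iff_dvd]
          refine hL.trans ?_
          have h5 : (p + r) % p = r := by
            rw [Nat.add_mod_left, Nat.mod_eq_of_lt (by omega)]
          have h6 : b % p = b := Nat.mod_eq_of_lt (by omega)
          rw [h5, h6, Nat.choose_eq_zero_of_lt (by omega), zero_mul]
        rw [this]; simp
    · right; omega
  have hterm : (MvPolynomial.C (α a) * MvPolynomial.X 1 ^ (3 * m - a) *
      (MvPolynomial.C (β j * (-1) ^ (j - b) * (j.choose b : k))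
      * MvPolynomial.X 0 ^ (j - b) * MvPolynomial.X 2 ^ (3 * m - j)) : MvPolynomial (Fin 3) k)
      = MvPolynomial.C (α a * (β j * (-1) ^ (j - b) * (j.choose b : k)))
      * MvPolynomial.X 0 ^ (j - b) * MvPolynomial.X 1 ^ (3 * m - a)
      * MvPolynomial.X 2 ^ (3 * m - j) := by
    rw [MvPolynomial.C_mul (a := α a)]; ring
  rw [hterm]
  rcases key with h | h
  · rw [h]; simp
  · refine (aux_degreeOf _ _ _ _ t).trans ?_
    fin_cases t <;> simp <;> omega
end

section
/- Lemma 2.3(2): Suppose that for i = 1, 2 the coefficient of x^{p−1} in (x³ + A_i x + B_i)^{(p−1)/2} ∈ k[x] is zero (i.e., E₁ and E₂ are supersingular). Then the degree of b = γ_{2p−1} ∈ k[λ,μ,ν] in the variable λ is at most (p−5)/2, and its degrees in the variables μ and ν are each at most p−2. -/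
open Polynomial in
lemma howe_aux_cubic {k : Type*} [Field k] (A B : k) (u : MvPolynomial (Fin 3) k) :
    (X ^ 3 + C (MvPolynomial.C A * u ^ 2) * X + C (MvPolynomial.C B * u ^ 3) :
      Polynomial (MvPolynomial (Fin 3) k)) =
    ((X ^ 3 + C A * X + C B : Polynomial k).map MvPolynomial.C).scaleRoots u := by
  have hd : (X ^ 3 + C A * X + C B : Polynomial k).natDegree = 3 := by compute_degree!
  have hd' : ((X ^ 3 + C A * X + C B : Polynomial k).map
      (MvPolynomial.C : k →+* MvPolynomial (Fin 3) k)).natDegree = 3 := by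
    rw [natDegree_map_eq_of_injective (MvPolynomial.C_injective _ _), hd]
  ext1 i
  rw [coeff_scaleRoots, hd']
  simp only [Polynomial.map_add, Polynomial.map_mul, Polynomial.map_pow, map_X, map_C,
    coeff_add, coeff_X_pow, coeff_C_mul, coeff_X, coeff_C]
  rcases i with _ | _ | _ | _ | i
  · simp
  · simp
  · simp
  · simp
  · simp

open Polynomial in
lemma howe_aux_pow {k : Type*} [Field k] (A B : k) (u : MvPolynomial (Fin 3) k) (m : ℕ) :
    (X ^ 3 + C (MvPolynomial.C A * u ^ 2) * X + C (MvPolynomial.C B * u ^ 3) :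
      Polynomial (MvPolynomial (Fin 3) k)) ^ m =
    (((X ^ 3 + C A * X + C B : Polynomial k) ^ m).map MvPolynomial.C).scaleRoots u := by
  rw [howe_aux_cubic, Polynomial.map_pow, pow_scaleRoots_of_isReduced]

open Polynomial in
lemma howe_aux_natDegree {k : Type*} [Field k] (A B : k) (m : ℕ) :
    ((X ^ 3 + C A * X + C B : Polynomial k) ^ m).natDegree = 3 * m := by
  have hd : (X ^ 3 + C A * X + C B : Polynomial k).natDegree = 3 := by compute_degree!
  rw [natDegree_pow, hd, mul_comm]

open Polynomial in
lemma howe_aux_coeff {k : Type*} [Field k] (A B : k) (u : MvPolynomial (Fin 3) k) (m i : ℕ) :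
    ((X ^ 3 + C (MvPolynomial.C A * u ^ 2) * X + C (MvPolynomial.C B * u ^ 3) :
      Polynomial (MvPolynomial (Fin 3) k)) ^ m).coeff i =
    MvPolynomial.C (((X ^ 3 + C A * X + C B : Polynomial k) ^ m).coeff i) * u ^ (3 * m - i) := by
  rw [howe_aux_pow, coeff_scaleRoots, natDegree_map_eq_of_injective (MvPolynomial.C_injective _ _),
    howe_aux_natDegree, coeff_map]

open Polynomial in
lemma howe_aux_coeff2 {k : Type*} [Field k] (A B : k) (u v : MvPolynomial (Fin 3) k) (m n : ℕ) :
    (((X - C v) ^ 3 + C (MvPolynomial.C A * u ^ 2) * (X - C v) + C (MvPolynomial.C B * u ^ 3) :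
      Polynomial (MvPolynomial (Fin 3) k)) ^ m).coeff n =
    ∑ j ∈ Finset.range (3 * m + 1),
      MvPolynomial.C (((X ^ 3 + C A * X + C B : Polynomial k) ^ m).coeff j) * u ^ (3 * m - j)
        * ((-v) ^ (j - n) * (j.choose n : MvPolynomial (Fin 3) k)) := by
  have h : ((X - C v) ^ 3 + C (MvPolynomial.C A * u ^ 2) * (X - C v)
      + C (MvPolynomial.C B * u ^ 3) : Polynomial (MvPolynomial (Fin 3) k)) ^ m =
      ((X ^ 3 + C (MvPolynomial.C A * u ^ 2) * X + C (MvPolynomial.C B * u ^ 3) :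
        Polynomial (MvPolynomial (Fin 3) k)) ^ m).comp (X - C v) := by
    simp only [pow_comp, add_comp, mul_comp, X_comp, C_comp]
  have hd : ((X ^ 3 + C (MvPolynomial.C A * u ^ 2) * X + C (MvPolynomial.C B * u ^ 3) :
        Polynomial (MvPolynomial (Fin 3) k)) ^ m).natDegree < 3 * m + 1 := by
    rw [howe_aux_pow, natDegree_scaleRoots,
      natDegree_map_eq_of_injective (MvPolynomial.C_injective _ _), howe_aux_natDegree]
    omega
  rw [h, comp, eval₂_eq_sum_range' _ hd, finset_sum_coeff]
  refine Finset.sum_congr rfl fun j _ => ?_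
  rw [coeff_C_mul, howe_aux_coeff, sub_eq_add_neg, ← C_neg, coeff_X_add_C_pow]

lemma howe_aux_deg {k : Type*} [Field k] (a b : k) (r s t N : ℕ) (i : Fin 3) :
    MvPolynomial.degreeOf i
      (MvPolynomial.C a * MvPolynomial.X 1 ^ r * (MvPolynomial.C b * MvPolynomial.X 2 ^ s *
        ((-MvPolynomial.X 0) ^ t * (N : MvPolynomial (Fin 3) k)))) ≤ ![t, r, s] i := by
  have e : (MvPolynomial.C a * MvPolynomial.X 1 ^ r * (MvPolynomial.C b * MvPolynomial.X 2 ^ s *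
        ((-MvPolynomial.X 0) ^ t * (N : MvPolynomial (Fin 3) k)))) =
      MvPolynomial.C (a * b * (-1) ^ t * N) *
        (MvPolynomial.X 0 ^ t * (MvPolynomial.X 1 ^ r * MvPolynomial.X 2 ^ s)) := by
    rw [neg_pow]
    simp only [map_mul, map_pow, map_neg, map_one, map_natCast]
    ring
  rw [e]
  refine (MvPolynomial.degreeOf_C_mul_le _ _ _).trans ?_
  refine (MvPolynomial.degreeOf_mul_le _ _ _).trans ?_
  have h1 := MvPolynomial.degreeOf_mul_le i (MvPolynomial.X 1 ^ r : MvPolynomial (Fin 3) k)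
    (MvPolynomial.X 2 ^ s)
  have h2 := MvPolynomial.degreeOf_pow_le i (MvPolynomial.X 0 : MvPolynomial (Fin 3) k) t
  have h3 := MvPolynomial.degreeOf_pow_le i (MvPolynomial.X 1 : MvPolynomial (Fin 3) k) r
  have h4 := MvPolynomial.degreeOf_pow_le i (MvPolynomial.X 2 : MvPolynomial (Fin 3) k) s
  rw [MvPolynomial.degreeOf_X] at h2 h3 h4
  fin_cases i <;> simp at h1 h2 h3 h4 ⊢ <;> omega


/-- **Lemma 2.3(2)**: if `E₁` and `E₂` are supersingular, then the degree of
`b = γ_{2p−1}` in `λ` is at most `(p−5)/2`, and its degrees in `μ` and `ν` are each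
at most `p−2`. -/
theorem degree_b_le (p : ℕ) (hp : p.Prime) (hp3 : 3 < p)
    (k : Type*) [Field k] [CharP k p] (A₁ B₁ A₂ B₂ : k)
    (hΔ₁ : 4 * A₁ ^ 3 + 27 * B₁ ^ 2 ≠ 0) (hΔ₂ : 4 * A₂ ^ 3 + 27 * B₂ ^ 2 ≠ 0)
    (hss₁ : ((Polynomial.X ^ 3 + Polynomial.C A₁ * Polynomial.X + Polynomial.C B₁ :
        Polynomial k) ^ ((p - 1) / 2)).coeff (p - 1) = 0)
    (hss₂ : ((Polynomial.X ^ 3 + Polynomial.C A₂ * Polynomial.X + Polynomial.C B₂ :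
        Polynomial k) ^ ((p - 1) / 2)).coeff (p - 1) = 0) :
    MvPolynomial.degreeOf 0 (howeGamma A₁ B₁ A₂ B₂ p (2 * p - 1)) ≤ (p - 5) / 2 ∧
    MvPolynomial.degreeOf 1 (howeGamma A₁ B₁ A₂ B₂ p (2 * p - 1)) ≤ p - 2 ∧
    MvPolynomial.degreeOf 2 (howeGamma A₁ B₁ A₂ B₂ p (2 * p - 1)) ≤ p - 2 := by
  obtain ⟨m, hm⟩ : ∃ m, p = 2 * m + 1 := hp.odd_of_ne_two (by omega)
  have hm2 : (p - 1) / 2 = m := by omega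
  haveI : Fact p.Prime := ⟨hp⟩
  rw [hm2] at hss₁ hss₂
  have key : ∀ q : Fin 3, MvPolynomial.degreeOf q (howeGamma A₁ B₁ A₂ B₂ p (2 * p - 1)) ≤
      ![(p - 5) / 2, p - 2, p - 2] q := by
    intro q
    rw [howeGamma, howeF, hm2, mul_pow, Polynomial.coeff_mul]
    refine (MvPolynomial.degreeOf_sum_le _ _ _).trans (Finset.sup_le ?_)
    rintro ⟨i, n⟩ hin
    have hin' : i + n = 2 * p - 1 := Finset.HasAntidiagonal.mem_antidiagonal.mp hin
    dsimp only
    rw [howe_aux_coeff, howe_aux_coeff2, Finset.mul_sum]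
    refine (MvPolynomial.degreeOf_sum_le _ _ _).trans (Finset.sup_le ?_)
    intro j hj
    have hj' : j ≤ 3 * m := by
      have := Finset.mem_range.mp hj
      omega
    by_cases h1 : 3 * m < i
    · rw [Polynomial.coeff_eq_zero_of_natDegree_lt (by rw [howe_aux_natDegree]; exact h1)]
      simp
    by_cases h2 : j < n
    · rw [Nat.choose_eq_zero_of_lt h2]
      simp
    by_cases h3 : i = p - 1
    · rw [h3, hss₁]
      simp
    by_cases h4 : j = p - 1
    · rw [h4, hss₂]
      simp
    by_cases h5 : p ≤ j ∧ n < p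
    · have h6 : (j.choose n : MvPolynomial (Fin 3) k) = 0 := by
        rw [CharP.cast_eq_zero_iff (MvPolynomial (Fin 3) k) p]
        have h7 := Choose.choose_modEq_choose_mod_mul_choose_div_nat (p := p) (n := j) (k := n)
        have h8 : j % p = j - p := by
          rw [Nat.mod_eq_sub_mod h5.1, Nat.mod_eq_of_lt (by omega)]
        rw [h8, Nat.mod_eq_of_lt h5.2,
          Nat.choose_eq_zero_of_lt (show j - p < n by omega), zero_mul] at h7
        exact (Nat.modEq_zero_iff_dvd).mp h7
      rw [h6]
      simp
    refine (howe_aux_deg _ _ _ _ _ _ _).trans ?_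
    fin_cases q <;> simp <;> omega
  exact ⟨key 0, key 1, key 2⟩
end

section
/- Lemma 2.3(3): Suppose that for i = 1, 2 the coefficient of x^{p−1} in (x³ + A_i x + B_i)^{(p−1)/2} ∈ k[x] is zero (i.e., E₁ and E₂ are supersingular). Then the degree of c = γ_{p−2} ∈ k[λ,μ,ν] in each of the variables λ, μ and ν is at most (3p−3)/2. -/
theorem dle_mul {k : Type*} [Field k] {j : Fin 3} {a b : ℕ}
    {P Q : Polynomial (MvPolynomial (Fin 3) k)}
    (hP : ∀ i, MvPolynomial.degreeOf j (P.coeff i) ≤ a)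
    (hQ : ∀ i, MvPolynomial.degreeOf j (Q.coeff i) ≤ b) :
    ∀ i, MvPolynomial.degreeOf j ((P * Q).coeff i) ≤ a + b := by
  intro i
  rw [Polynomial.coeff_mul]
  refine (MvPolynomial.degreeOf_sum_le _ _ _).trans (Finset.sup_le fun x _ => ?_)
  exact (MvPolynomial.degreeOf_mul_le _ _ _).trans (add_le_add (hP _) (hQ _))

theorem dle_add {k : Type*} [Field k] {j : Fin 3} {a : ℕ}
    {P Q : Polynomial (MvPolynomial (Fin 3) k)}
    (hP : ∀ i, MvPolynomial.degreeOf j (P.coeff i) ≤ a)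
    (hQ : ∀ i, MvPolynomial.degreeOf j (Q.coeff i) ≤ a) :
    ∀ i, MvPolynomial.degreeOf j ((P + Q).coeff i) ≤ a := by
  intro i
  rw [Polynomial.coeff_add]
  exact (MvPolynomial.degreeOf_add_le _ _ _).trans (max_le (hP _) (hQ _))

theorem dle_C {k : Type*} [Field k] {j : Fin 3} {a : ℕ} {c : MvPolynomial (Fin 3) k}
    (hc : MvPolynomial.degreeOf j c ≤ a) :
    ∀ i, MvPolynomial.degreeOf j ((Polynomial.C c).coeff i) ≤ a := by
  intro i
  rw [Polynomial.coeff_C]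
  split_ifs
  · exact hc
  · simp

theorem dle_X {k : Type*} [Field k] (j : Fin 3) (i : ℕ) :
    MvPolynomial.degreeOf j
      ((Polynomial.X : Polynomial (MvPolynomial (Fin 3) k)).coeff i) ≤ 0 := by
  rw [Polynomial.coeff_X]
  split_ifs <;> simp

theorem dle_pow {k : Type*} [Field k] {j : Fin 3} {a : ℕ}
    {P : Polynomial (MvPolynomial (Fin 3) k)}
    (hP : ∀ i, MvPolynomial.degreeOf j (P.coeff i) ≤ a) (n : ℕ) :
    ∀ i, MvPolynomial.degreeOf j ((P ^ n).coeff i) ≤ n * a := by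
  induction n with
  | zero =>
    intro i
    rw [pow_zero, Polynomial.coeff_one]
    split_ifs <;> simp
  | succ n ih =>
    rw [pow_succ, Nat.succ_mul]
    exact dle_mul ih hP

theorem dle_mono {k : Type*} [Field k] {j : Fin 3} {a b : ℕ} (hab : a ≤ b)
    {P : Polynomial (MvPolynomial (Fin 3) k)}
    (hP : ∀ i, MvPolynomial.degreeOf j (P.coeff i) ≤ a) :
    ∀ i, MvPolynomial.degreeOf j (P.coeff i) ≤ b := fun i => (hP i).trans hab

theorem dX {k : Type*} [Field k] (c : k) (j l : Fin 3) (n : ℕ) :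
    MvPolynomial.degreeOf j (MvPolynomial.C c * MvPolynomial.X l ^ n : MvPolynomial (Fin 3) k)
      ≤ n * (if j = l then 1 else 0) := by
  refine (MvPolynomial.degreeOf_C_mul_le _ _ _).trans
    ((MvPolynomial.degreeOf_pow_le _ _ _).trans ?_)
  rw [MvPolynomial.degreeOf_X]

theorem dcubic {k : Type*} [Field k] (A B : k) (j l : Fin 3) (e : ℕ)
    (P : Polynomial (MvPolynomial (Fin 3) k))
    (hP : ∀ i, MvPolynomial.degreeOf j (P.coeff i) ≤ e)
    (he : e = 0 ∨ j ≠ l) :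
    ∀ i, MvPolynomial.degreeOf j
      ((P ^ 3 + Polynomial.C (MvPolynomial.C A * MvPolynomial.X l ^ 2) * P
        + Polynomial.C (MvPolynomial.C B * MvPolynomial.X l ^ 3)).coeff i)
      ≤ 3 * (e + if j = l then 1 else 0) := by
  refine dle_add (dle_add ?_ ?_) ?_
  · exact dle_mono (by omega) (dle_pow hP 3)
  · exact dle_mono (by split_ifs <;> omega) (dle_mul (dle_C (dX A j l 2)) hP)
  · exact dle_mono (by omega) (dle_C (dX B j l 3))

theorem dF {k : Type*} [Field k] (A₁ B₁ A₂ B₂ : k) (j : Fin 3) :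
    ∀ i, MvPolynomial.degreeOf j ((howeF A₁ B₁ A₂ B₂).coeff i) ≤ 3 := by
  have hL : ∀ i, MvPolynomial.degreeOf j ((Polynomial.X - Polynomial.C (MvPolynomial.X 0) :
      Polynomial (MvPolynomial (Fin 3) k)).coeff i) ≤ if j = 0 then 1 else 0 := by
    rw [sub_eq_add_neg, ← Polynomial.C_neg]
    refine dle_add (dle_mono (Nat.zero_le _) (dle_X j)) (dle_C ?_)
    rw [MvPolynomial.degreeOf_neg, MvPolynomial.degreeOf_X]
  have h1 := dcubic A₁ B₁ j 1 0 Polynomial.X (dle_X j) (Or.inl rfl)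
  have h2 := dcubic A₂ B₂ j 2 _ _ hL (by fin_cases j <;> simp)
  unfold howeF
  refine dle_mono ?_ (dle_mul h1 h2)
  fin_cases j <;> simp

/-- **Lemma 2.3(3)**: if `E₁` and `E₂` are supersingular, then the degree of
`c = γ_{p−2}` in each of the variables `λ, μ, ν` is at most `(3p−3)/2`. -/
theorem degree_c_le (p : ℕ) (hp : p.Prime) (hp3 : 3 < p)
    (k : Type*) [Field k] [CharP k p] (A₁ B₁ A₂ B₂ : k)
    (hΔ₁ : 4 * A₁ ^ 3 + 27 * B₁ ^ 2 ≠ 0) (hΔ₂ : 4 * A₂ ^ 3 + 27 * B₂ ^ 2 ≠ 0)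
    (hss₁ : ((Polynomial.X ^ 3 + Polynomial.C A₁ * Polynomial.X + Polynomial.C B₁ :
        Polynomial k) ^ ((p - 1) / 2)).coeff (p - 1) = 0)
    (hss₂ : ((Polynomial.X ^ 3 + Polynomial.C A₂ * Polynomial.X + Polynomial.C B₂ :
        Polynomial k) ^ ((p - 1) / 2)).coeff (p - 1) = 0) :
    ∀ j : Fin 3,
      MvPolynomial.degreeOf j (howeGamma A₁ B₁ A₂ B₂ p (p - 2)) ≤ (3 * p - 3) / 2 := by
  intro j
  unfold howeGamma
  exact (dle_pow (dF A₁ B₁ A₂ B₂ j) _ _).trans (by omega)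
end

section
/- Lemma 2.3(4): Suppose that for i = 1, 2 the coefficient of x^{p−1} in (x³ + A_i x + B_i)^{(p−1)/2} ∈ k[x] is zero (i.e., E₁ and E₂ are supersingular). Then the degree of d = γ_{2p−2} ∈ k[λ,μ,ν] in the variable λ is at most (p−3)/2, and its degrees in the variables μ and ν are each at most p−1. -/
open Polynomial in
theorem hw_mono {k : Type*} [Field k] (q : k) (a b c : ℕ) :
    let t : MvPolynomial (Fin 3) k := MvPolynomial.C q * (MvPolynomial.X 0 ^ a * MvPolynomial.X 1 ^ b * MvPolynomial.X 2 ^ c)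
    t.degreeOf 0 ≤ a ∧ t.degreeOf 1 ≤ b ∧ t.degreeOf 2 ≤ c := by
  classical
  have h : ∀ s : Fin 3, (MvPolynomial.C q * (MvPolynomial.X 0 ^ a * MvPolynomial.X 1 ^ b * MvPolynomial.X 2 ^ c) : MvPolynomial (Fin 3) k).degreeOf s ≤ a * (if s = 0 then 1 else 0) + b * (if s = 1 then 1 else 0) + c * (if s = 2 then 1 else 0) := by
    intro s
    refine (MvPolynomial.degreeOf_C_mul_le _ _ _).trans ?_
    refine (MvPolynomial.degreeOf_mul_le _ _ _).trans (Nat.add_le_add ((MvPolynomial.degreeOf_mul_le _ _ _).trans (Nat.add_le_add ?_ ?_)) ?_) <;>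
    · refine (MvPolynomial.degreeOf_pow_le _ _ _).trans (Nat.mul_le_mul_left _ ?_)
      rw [MvPolynomial.degreeOf_X]
  refine ⟨by simpa using h 0, by simpa using h 1, by simpa using h 2⟩

open Polynomial in
theorem hw_deg {k : Type*} [Field k] (A B : k) : (X ^ 3 + C A * X + C B : k[X]).natDegree = 3 ∧ (X ^ 3 + C A * X + C B : k[X]).Monic := by
  constructor
  · compute_degree!
  · monicity!

open Polynomial in
theorem hw_scale {k : Type*} [Field k] (A B : k) (t : MvPolynomial (Fin 3) k) (n : ℕ) :
    (X ^ 3 + C (MvPolynomial.C A * t ^ 2) * X + C (MvPolynomial.C B * t ^ 3) : (MvPolynomial (Fin 3) k)[X]) ^ n =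
    ∑ i ∈ Finset.range (3 * n + 1), C (MvPolynomial.C (((X ^ 3 + C A * X + C B : k[X]) ^ n).coeff i) * t ^ (3 * n - i)) * X ^ i := by
  obtain ⟨hd, hm⟩ := hw_deg A B
  set g : k[X] := X ^ 3 + C A * X + C B with hg
  let G : (MvPolynomial (Fin 3) k)[X] := g.map MvPolynomial.C
  have hGd : G.natDegree = 3 := by rw [hm.natDegree_map, hd]
  have hGm : G.Monic := hm.map _
  have hbase : (X ^ 3 + C (MvPolynomial.C A * t ^ 2) * X + C (MvPolynomial.C B * t ^ 3) : (MvPolynomial (Fin 3) k)[X]) = G.scaleRoots t := by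
    ext1 i
    rw [coeff_scaleRoots, hGd]
    simp only [G, hg, coeff_map, coeff_add, coeff_X_pow, coeff_C_mul, coeff_X, coeff_C]
    by_cases h0 : i = 0
    · subst h0; simp
    by_cases h1 : i = 1
    · subst h1; simp
    by_cases h3 : i = 3
    · subst h3; simp
    simp [h0, h3, Ne.symm h1]
  have hpow : ∀ n : ℕ, (G.scaleRoots t) ^ n = (G ^ n).scaleRoots t := by
    intro n
    induction n with
    | zero => simp
    | succ n ih => rw [pow_succ, pow_succ, ih, mul_scaleRoots_of_noZeroDivisors]
  have hnd : (G ^ n).natDegree = 3 * n := by rw [hGm.natDegree_pow, hGd, mul_comm]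
  rw [hbase, hpow, as_sum_range_C_mul_X_pow ((G ^ n).scaleRoots t), natDegree_scaleRoots, hnd]
  refine Finset.sum_congr rfl fun i _ => ?_
  rw [coeff_scaleRoots, hnd, ← Polynomial.map_pow, coeff_map]

theorem hw_choose (n i j : ℕ) (hp : (2 * n + 1).Prime) (hi : 2 * n < i) (hi' : i ≤ 3 * n) (hj : 2 * n < j) (hj' : j ≤ 3 * n) :
    (2 * n + 1) ∣ j.choose (4 * n - i) := by
  haveI := Fact.mk hp
  have h := @Choose.choose_modEq_choose_mod_mul_choose_div_nat j (4 * n - i) (2 * n + 1) _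
  have h1 : j % (2 * n + 1) = j - (2 * n + 1) := by
    rw [Nat.mod_eq_sub_mod (by omega), Nat.mod_eq_of_lt (by omega)]
  have h2 : (4 * n - i) % (2 * n + 1) = 4 * n - i := Nat.mod_eq_of_lt (by omega)
  rw [h1, h2, Nat.choose_eq_zero_of_lt (by omega : j - (2 * n + 1) < 4 * n - i), zero_mul] at h
  exact (Nat.modEq_zero_iff_dvd).1 h

open Polynomial in
theorem hw_gamma {k : Type*} [Field k] (A₁ B₁ A₂ B₂ : k) (n N : ℕ) :
    ((howeF A₁ B₁ A₂ B₂) ^ n).coeff N =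
    ∑ i ∈ Finset.range (3 * n + 1), ∑ j ∈ Finset.range (3 * n + 1),
      if i ≤ N then
      MvPolynomial.C (((X ^ 3 + C A₁ * X + C B₁ : k[X]) ^ n).coeff i * ((X ^ 3 + C A₂ * X + C B₂ : k[X]) ^ n).coeff j * (-1) ^ (j - (N - i)) * (j.choose (N - i) : k)) *
       (MvPolynomial.X 0 ^ (j - (N - i)) * MvPolynomial.X 1 ^ (3 * n - i) * MvPolynomial.X 2 ^ (3 * n - j)) else 0 := by
  have h2 := congrArg (fun q => q.comp (X - C (MvPolynomial.X 0))) (hw_scale A₂ B₂ (MvPolynomial.X 2) n)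
  simp only [pow_comp, add_comp, mul_comp, X_comp, C_comp, sum_comp] at h2
  rw [howeF, mul_pow, hw_scale, h2, Finset.sum_mul_sum, finset_sum_coeff]
  refine Finset.sum_congr rfl fun i _ => ?_
  rw [finset_sum_coeff]
  refine Finset.sum_congr rfl fun j _ => ?_
  rw [mul_assoc, coeff_C_mul, coeff_X_pow_mul']
  split_ifs
  · rw [coeff_C_mul, sub_eq_add_neg, ← C_neg, coeff_X_add_C_pow, neg_pow]
    simp only [map_mul, map_pow, map_neg, map_one, map_natCast]
    ring
  · simp

/-- **Lemma 2.3(4)**: if `E₁` and `E₂` are supersingular, then the degree of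
`d = γ_{2p−2}` in `λ` is at most `(p−3)/2`, and its degrees in `μ` and `ν` are each
at most `p−1`. -/
theorem degree_d_le (p : ℕ) (hp : p.Prime) (hp3 : 3 < p)
    (k : Type*) [Field k] [CharP k p] (A₁ B₁ A₂ B₂ : k)
    (hΔ₁ : 4 * A₁ ^ 3 + 27 * B₁ ^ 2 ≠ 0) (hΔ₂ : 4 * A₂ ^ 3 + 27 * B₂ ^ 2 ≠ 0)
    (hss₁ : ((Polynomial.X ^ 3 + Polynomial.C A₁ * Polynomial.X + Polynomial.C B₁ :
        Polynomial k) ^ ((p - 1) / 2)).coeff (p - 1) = 0)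
    (hss₂ : ((Polynomial.X ^ 3 + Polynomial.C A₂ * Polynomial.X + Polynomial.C B₂ :
        Polynomial k) ^ ((p - 1) / 2)).coeff (p - 1) = 0) :
    MvPolynomial.degreeOf 0 (howeGamma A₁ B₁ A₂ B₂ p (2 * p - 2)) ≤ (p - 3) / 2 ∧
    MvPolynomial.degreeOf 1 (howeGamma A₁ B₁ A₂ B₂ p (2 * p - 2)) ≤ p - 1 ∧
    MvPolynomial.degreeOf 2 (howeGamma A₁ B₁ A₂ B₂ p (2 * p - 2)) ≤ p - 1 := by
  obtain ⟨n, rfl⟩ : ∃ n, p = 2 * n + 1 := by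
    obtain ⟨n, hn⟩ := hp.odd_of_ne_two (by omega)
    exact ⟨n, hn⟩
  have e1 : (2 * n + 1 - 1) / 2 = n := by omega
  have e2 : 2 * n + 1 - 1 = 2 * n := by omega
  have e3 : 2 * (2 * n + 1) - 2 = 4 * n := by omega
  have e4 : (2 * n + 1 - 3) / 2 = n - 1 := by omega
  rw [e1, e2] at hss₁ hss₂
  rw [e3, e4, e2, howeGamma, e1, hw_gamma]
  have key : ∀ s : Fin 3, ∀ D : ℕ, (∀ i j : ℕ, i ≤ 3 * n → j ≤ 3 * n → 4 * n - i ≤ j →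
      i + j ≤ 5 * n - 1 → ∀ q : k, (MvPolynomial.C q * (MvPolynomial.X 0 ^ (j - (4 * n - i)) *
        MvPolynomial.X 1 ^ (3 * n - i) * MvPolynomial.X 2 ^ (3 * n - j)) :
        MvPolynomial (Fin 3) k).degreeOf s ≤ D) → MvPolynomial.degreeOf s (∑ i ∈ Finset.range (3 * n + 1), ∑ j ∈ Finset.range (3 * n + 1),
      if i ≤ 4 * n then
      MvPolynomial.C (((Polynomial.X ^ 3 + Polynomial.C A₁ * Polynomial.X + Polynomial.C B₁ : Polynomial k) ^ n).coeff i * ((Polynomial.X ^ 3 + Polynomial.C A₂ * Polynomial.X + Polynomial.C B₂ : Polynomial k) ^ n).coeff j * (-1) ^ (j - (4 * n - i)) * (j.choose (4 * n - i) : k)) *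
       (MvPolynomial.X 0 ^ (j - (4 * n - i)) * MvPolynomial.X 1 ^ (3 * n - i) * MvPolynomial.X 2 ^ (3 * n - j)) else 0) ≤ D := by
    intro s D H
    refine (MvPolynomial.degreeOf_sum_le _ _ _).trans (Finset.sup_le fun i hi => ?_)
    refine (MvPolynomial.degreeOf_sum_le _ _ _).trans (Finset.sup_le fun j hj => ?_)
    rw [Finset.mem_range] at hi hj
    rw [if_pos (by omega)]
    by_cases h1 : i = 2 * n
    · subst h1; simp [hss₁]
    by_cases h2 : j = 2 * n
    · subst h2; simp [hss₂]
    by_cases h3 : j < 4 * n - i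
    · simp [Nat.choose_eq_zero_of_lt h3]
    by_cases h4 : 2 * n < i ∧ 2 * n < j
    · have := hw_choose n i j hp h4.1 (by omega) h4.2 (by omega)
      rw [(CharP.cast_eq_zero_iff k (2 * n + 1) _).2 this]
      simp
    exact H i j (by omega) (by omega) (by omega) (by omega) _
  refine ⟨key 0 _ ?_, key 1 _ ?_, key 2 _ ?_⟩ <;> intro i j hi hj hij hs q
  · exact (hw_mono q _ _ _).1.trans (by omega)
  · exact (hw_mono q _ _ _).2.1.trans (by omega)
  · exact (hw_mono q _ _ _).2.2.trans (by omega)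
end

section
/- Nonsingularity of the canonical model of a Howe curve (key step in the proof of Proposition 2.1): Let k be an algebraically closed field of characteristic p > 3, let A₁, B₁, A₂, B₂ ∈ k satisfy 4A_i³ + 27B_i² ≠ 0 for i = 1, 2, and let (λ, μ, ν) ∈ k³ be of Howe type, i.e., μ ≠ 0, ν ≠ 0, and the polynomials f₁(x) = x³ + A₁μ²x + B₁μ³ and f₂(x) = (x−λ)³ + A₂ν²(x−λ) + B₂ν³ are coprime in k[x]. Then for every point (x₀, y₀, z₀, w₀) ∈ k⁴ ∖ {(0,0,0,0)} with Q(x₀,y₀,z₀,w₀) = 0 and P(x₀,y₀,z₀,w₀) = 0, the 2×4 matrix whose rows are the gradients (∂Q/∂x, ∂Q/∂y, ∂Q/∂z, ∂Q/∂w) and (∂P/∂x, ∂P/∂y, ∂P/∂z, ∂P/∂w) evaluated at (x₀,y₀,z₀,w₀) has rank 2. (In other words, the projective curve H' = V(Q, P) ⊂ P³ is nonsingular.) -/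
open MvPolynomial

/-- `f₁ʰ(x,y) = x³ + A₁μ²xy² + B₁μ³y³ ∈ k[x,y,z,w]`, with `x = X 0`, `y = X 1`. -/
noncomputable def f1h {k : Type*} [CommRing k] (A₁ B₁ mu : k) : MvPolynomial (Fin 4) k :=
  X 0 ^ 3 + C (A₁ * mu ^ 2) * X 0 * X 1 ^ 2 + C (B₁ * mu ^ 3) * X 1 ^ 3

/-- `f₂ʰ(x,y) = (x−λy)³ + A₂ν²(x−λy)y² + B₂ν³y³ ∈ k[x,y,z,w]`, with `x = X 0`, `y = X 1`. -/
noncomputable def f2h {k : Type*} [CommRing k] (A₂ B₂ lam nu : k) : MvPolynomial (Fin 4) k :=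
  (X 0 - C lam * X 1) ^ 3 + C (A₂ * nu ^ 2) * (X 0 - C lam * X 1) * X 1 ^ 2
    + C (B₂ * nu ^ 3) * X 1 ^ 3

theorem howe_aux_disc {k : Type*} [Field k] (A B m x y : k) (hD : 4 * A ^ 3 + 27 * B ^ 2 ≠ 0)
    (hm : m ≠ 0) (hy : y ≠ 0)
    (h1 : x ^ 3 + A * m ^ 2 * x * y ^ 2 + B * m ^ 3 * y ^ 3 = 0)
    (h2 : 3 * x ^ 2 + A * m ^ 2 * y ^ 2 = 0) : False := by
  have ha : A * m ^ 2 * y ^ 2 = - 3 * x ^ 2 := by linear_combination h2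
  have hb : B * m ^ 3 * y ^ 3 = 2 * x ^ 3 := by linear_combination h1 - x * h2
  have h : (4 * A ^ 3 + 27 * B ^ 2) * (m ^ 6 * y ^ 6) = 0 := by
    have : (4 * A ^ 3 + 27 * B ^ 2) * (m ^ 6 * y ^ 6)
      = 4 * (A * m ^ 2 * y ^ 2) ^ 3 + 27 * (B * m ^ 3 * y ^ 3) ^ 2 := by ring
    rw [this, ha, hb]; ring
  exact mul_ne_zero hD (mul_ne_zero (pow_ne_zero _ hm) (pow_ne_zero _ hy)) h

theorem howe_aux_minor {k : Type*} [Field k] (s t a b c d : k) (h : ¬ (s = 0 ∧ t = 0))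
    (h1 : s * a + t * b = 0) (h2 : s * c + t * d = 0) : a * d - b * c = 0 := by
  by_contra hne
  apply h
  constructor
  · have : s * (a * d - b * c) = 0 := by linear_combination d * h1 - b * h2
    exact (mul_eq_zero.mp this).resolve_right hne
  · have : t * (a * d - b * c) = 0 := by linear_combination a * h2 - c * h1
    exact (mul_eq_zero.mp this).resolve_right hne

/-- Nonsingularity of the canonical model `H' = V(Q, P) ⊂ P³` of a Howe curve: for an
algebraically closed field `k` of characteristic `p > 3`, nonsingular `Eᵢ` and a Howe-type
triple `(λ, μ, ν)`, at every nonzero point of `k⁴` where the quadric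
`Q = z² − w² − q(x,y)` (with `y·q = f₁ʰ − f₂ʰ`) and the cubic `P = z²y − f₁ʰ` both
vanish, the `2×4` matrix of their gradients has rank `2`. -/
theorem howe_canonical_model_nonsingular (p : ℕ) (hp : p.Prime) (hp3 : 3 < p)
    (k : Type*) [Field k] [IsAlgClosed k] [CharP k p]
    (A₁ B₁ A₂ B₂ lam mu nu : k)
    (hΔ₁ : 4 * A₁ ^ 3 + 27 * B₁ ^ 2 ≠ 0) (hΔ₂ : 4 * A₂ ^ 3 + 27 * B₂ ^ 2 ≠ 0)
    (hmu : mu ≠ 0) (hnu : nu ≠ 0)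
    (hcop : IsCoprime
      (Polynomial.X ^ 3 + Polynomial.C (A₁ * mu ^ 2) * Polynomial.X
        + Polynomial.C (B₁ * mu ^ 3) : Polynomial k)
      ((Polynomial.X - Polynomial.C lam) ^ 3
        + Polynomial.C (A₂ * nu ^ 2) * (Polynomial.X - Polynomial.C lam)
        + Polynomial.C (B₂ * nu ^ 3)))
    (q Q P : MvPolynomial (Fin 4) k)
    (hq : X 1 * q = f1h A₁ B₁ mu - f2h A₂ B₂ lam nu)
    (hQ : Q = X 2 ^ 2 - X 3 ^ 2 - q)
    (hP : P = X 2 ^ 2 * X 1 - f1h A₁ B₁ mu)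
    (v : Fin 4 → k) (hv : v ≠ 0)
    (hQv : eval v Q = 0) (hPv : eval v P = 0) :
    (Matrix.of ![fun j : Fin 4 => eval v (pderiv j Q),
        fun j : Fin 4 => eval v (pderiv j P)] : Matrix (Fin 2) (Fin 4) k).rank = 2 := by
  have h2 : (2 : k) ≠ 0 := by
    intro h
    have h' : ((2 : ℕ) : k) = 0 := by exact_mod_cast h
    rw [CharP.cast_eq_zero_iff k p] at h'
    have := Nat.le_of_dvd (by norm_num) h'
    omega
  have hqe : q = C (3 * lam) * X 0 ^ 2 + C (A₁ * mu ^ 2 - A₂ * nu ^ 2 - 3 * lam ^ 2) * X 0 * X 1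
      + C (lam ^ 3 + B₁ * mu ^ 3 - B₂ * nu ^ 3 + A₂ * nu ^ 2 * lam) * X 1 ^ 2 := by
    apply mul_left_cancel₀ (X_ne_zero (R := k) (1 : Fin 4))
    rw [hq, f1h, f2h]
    have h3 : (C (3 : k) : MvPolynomial (Fin 4) k) = 3 := map_ofNat C 3
    simp only [map_add, map_sub, map_mul, map_pow, h3]
    ring
  subst hqe
  subst hQ
  subst hP
  obtain ⟨x, hx⟩ : ∃ x, x = v 0 := ⟨_, rfl⟩
  obtain ⟨y, hy⟩ : ∃ x, x = v 1 := ⟨_, rfl⟩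
  obtain ⟨z, hz⟩ : ∃ x, x = v 2 := ⟨_, rfl⟩
  obtain ⟨w, hw⟩ : ∃ x, x = v 3 := ⟨_, rfl⟩
  have hv' : ¬ (x = 0 ∧ y = 0 ∧ z = 0 ∧ w = 0) := by
    rintro ⟨h0, h1, h2, h3⟩
    apply hv
    funext i
    fin_cases i <;> simp_all
  have hcop' : ∀ r : k, r ^ 3 + A₁ * mu ^ 2 * r + B₁ * mu ^ 3 = 0 →
      (r - lam) ^ 3 + A₂ * nu ^ 2 * (r - lam) + B₂ * nu ^ 3 = 0 → False := by
    intro r e1 e2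
    obtain ⟨a, b, hab⟩ := hcop
    have := congrArg (Polynomial.eval r) hab
    simp only [Polynomial.eval_add, Polynomial.eval_mul, Polynomial.eval_pow, Polynomial.eval_X,
      Polynomial.eval_C, Polynomial.eval_sub, Polynomial.eval_one, e1, e2] at this
    simp at this
  have hr : LinearIndependent k (Matrix.of ![fun j : Fin 4 => eval v (pderiv j
        (X 2 ^ 2 - X 3 ^ 2 - (C (3 * lam) * X 0 ^ 2
          + C (A₁ * mu ^ 2 - A₂ * nu ^ 2 - 3 * lam ^ 2) * X 0 * X 1
          + C (lam ^ 3 + B₁ * mu ^ 3 - B₂ * nu ^ 3 + A₂ * nu ^ 2 * lam) * X 1 ^ 2))),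
        fun j : Fin 4 => eval v (pderiv j (X 2 ^ 2 * X 1 - f1h A₁ B₁ mu))] :
        Matrix (Fin 2) (Fin 4) k).row := by
    refine LinearIndependent.pair_iff.mpr ?_
    intro s t hst
    by_contra hne
    have g0 := congrFun hst 0
    have g1 := congrFun hst 1
    have g2 := congrFun hst 2
    have g3 := congrFun hst 3
    simp only [f1h] at hPv
    simp [f1h, Matrix.row, pderiv_X, Pi.single_apply, Derivation.leibniz, Derivation.leibniz_pow, ← hx, ← hy, ← hz, ← hw] at g0 g1 g2 g3 hQv hPv
    have m23 := howe_aux_minor s t (2 * z) (2 * z * y) (-2 * w) 0 hne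
      (by linear_combination g2) (by rcases g3 with h | h | h <;> simp [h])
    have G0 : s * -(6 * lam * x + (A₁ * mu ^ 2 - A₂ * nu ^ 2 - 3 * lam ^ 2) * y)
        + t * -(3 * x ^ 2 + A₁ * mu ^ 2 * y ^ 2) = 0 := by
      linear_combination g0
    have G1 : s * -((A₁ * mu ^ 2 - A₂ * nu ^ 2 - 3 * lam ^ 2) * x
          + 2 * (lam ^ 3 + B₁ * mu ^ 3 - B₂ * nu ^ 3 + A₂ * nu ^ 2 * lam) * y)
        + t * (z ^ 2 - 2 * (A₁ * mu ^ 2) * x * y - 3 * (B₁ * mu ^ 3) * y ^ 2) = 0 := by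
      linear_combination g1
    have m02 := howe_aux_minor s t _ _ (2 * z) (2 * z * y) hne G0 (by linear_combination g2)
    have m03 := howe_aux_minor s t _ _ (-2 * w) 0 hne G0 (by rcases g3 with h | h | h <;> simp [h])
    have m12 := howe_aux_minor s t _ _ (2 * z) (2 * z * y) hne G1 (by linear_combination g2)
    have hF2 : w ^ 2 * y = (x - lam * y) ^ 3 + A₂ * nu ^ 2 * (x - lam * y) * y ^ 2
        + B₂ * nu ^ 3 * y ^ 3 := by linear_combination hPv - y * hQv
    by_cases hy0 : y = 0
    · have hx0 : x = 0 := by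
        rw [hy0] at hPv
        have : x ^ 3 = 0 := by linear_combination - hPv
        exact pow_eq_zero_iff (by norm_num) |>.mp this
      rw [hx0, hy0] at m12 hQv
      have hz0 : z = 0 := by
        have : 2 * z ^ 3 = 0 := by linear_combination - m12
        exact pow_eq_zero_iff (by norm_num) |>.mp ((mul_eq_zero.mp this).resolve_left h2)
      have hw0 : w = 0 := by
        rw [hz0] at hQv
        have : w ^ 2 = 0 := by linear_combination - hQv
        exact pow_eq_zero_iff (by norm_num) |>.mp this
      exact hv' ⟨hx0, hy0, hz0, hw0⟩
    · by_cases hz0 : z = 0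
      · have hF1 : x ^ 3 + A₁ * mu ^ 2 * x * y ^ 2 + B₁ * mu ^ 3 * y ^ 3 = 0 := by
          rw [hz0] at hPv; linear_combination - hPv
        by_cases hw0 : w = 0
        · rw [hw0] at hF2
          apply hcop' (x / y)
          · field_simp
            linear_combination hF1
          · field_simp
            linear_combination - hF2
        · have : (2 * w) * (3 * x ^ 2 + A₁ * mu ^ 2 * y ^ 2) = 0 := by linear_combination - m03
          exact howe_aux_disc A₁ B₁ mu x y hΔ₁ hmu hy0 hF1
            ((mul_eq_zero.mp this).resolve_left (mul_ne_zero h2 hw0))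
      · have hw0 : w = 0 := by
          have : (2 * 2 * z * y) * w = 0 := by linear_combination m23
          exact (mul_eq_zero.mp this).resolve_left
            (mul_ne_zero (mul_ne_zero (mul_ne_zero h2 h2) hz0) hy0)
        rw [hw0] at hF2
        apply howe_aux_disc A₂ B₂ nu (x - lam * y) y hΔ₂ hnu hy0
        · linear_combination - hF2
        · have : (2 * z) * (3 * (x - lam * y) ^ 2 + A₂ * nu ^ 2 * y ^ 2) = 0 := by
            linear_combination m02
          exact (mul_eq_zero.mp this).resolve_left (mul_ne_zero h2 hz0)
  have := hr.rank_matrix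
  simpa using this
end

section
/- Lemma 3.1 (in the coordinate form established in its proof): Let k be a field and let T₁, T₂, T₃, T₄ be linear forms in k[x₁, x₂, x₃, x₄] forming a basis of the space of linear forms. Let Q be a homogeneous quadratic form whose coefficients of T₃² and of T₄², when Q is written in the coordinates T₁, T₂, T₃, T₄, are both nonzero. Let R₁ be a polynomial lying in the subalgebra k[T₁, T₂, T₃] whose degree in T₃ is at most 2, let R₂ be a polynomial lying in k[T₁, T₂, T₄] whose degree in T₄ is at most 2, and let L be a linear form such that R₂ − R₁ = L·Q. Then L lies in the k-span of T₁ and T₂. (In the setting of the paper: if R^{(i)} = P − L^{(i)}Q are the cubics defining the elliptic quotients associated to an admissible pair (U^{(1)}, U^{(2)}) of elements of EQ(H) for a Howe curve H = V(Q,P), then the linear form ȳ := L^{(1)} − L^{(2)} belongs to U^{(1)} ∩ U^{(2)}.) -/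
open MvPolynomial in
theorem aux_deg_s8 {k : Type*} [Field k] (p : MvPolynomial (Fin 3) k)
    (hp : degreeOf 2 p ≤ 2) (f : Fin 3 → Polynomial k)
    (h0 : (f 0).natDegree = 0) (h1 : (f 1).natDegree = 0) (h2 : (f 2).natDegree ≤ 1) :
    (aeval f p).coeff 3 = 0 := by
  apply Polynomial.coeff_eq_zero_of_natDegree_lt
  refine lt_of_le_of_lt (b := 2) ?_ (by norm_num)
  rw [aeval_def, eval₂_eq']
  apply Polynomial.natDegree_sum_le_of_forall_le
  intro m hm
  have hm2 : m 2 ≤ 2 := (degreeOf_le_iff.mp hp) m hm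
  rw [Fin.prod_univ_three]
  have e0 : (f 0 ^ m 0).natDegree ≤ 0 := by
    have := Polynomial.natDegree_pow_le (p := f 0) (n := m 0)
    rw [h0] at this; simpa using this
  have e1 : (f 1 ^ m 1).natDegree ≤ 0 := by
    have := Polynomial.natDegree_pow_le (p := f 1) (n := m 1)
    rw [h1] at this; simpa using this
  have e2 : (f 2 ^ m 2).natDegree ≤ 2 := by
    have := Polynomial.natDegree_pow_le (p := f 2) (n := m 2)
    nlinarith
  have e := Polynomial.natDegree_mul_le_of_le (Polynomial.natDegree_mul_le_of_le e0 e1) e2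
  have := Polynomial.natDegree_C_mul_le (coeff m p) (f 0 ^ m 0 * f 1 ^ m 1 * f 2 ^ m 2)
  exact this.trans (by simpa using e)

open MvPolynomial in
theorem aux_lin {k : Type*} [Field k] (p : MvPolynomial (Fin 4) k)
    (hp : p.IsHomogeneous 1) :
    p = ∑ j, (coeff (Finsupp.single j 1) p) • X j := by
  have h : p ∈ homogeneousSubmodule (Fin 4) k 1 := hp
  rw [homogeneousSubmodule_one_eq_span_X, Submodule.mem_span_range_iff_exists_fun] at h
  obtain ⟨a, rfl⟩ := h
  refine Finset.sum_congr rfl fun j _ => ?_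
  congr 1
  simp [coeff_sum, coeff_X, Finsupp.single_left_inj]

open MvPolynomial in
theorem aux_zero {k : Type*} [Field k]
    (T : Fin 4 → MvPolynomial (Fin 4) k)
    (φ : MvPolynomial (Fin 4) k →ₐ[k] Polynomial k) (s : Fin 4) (hs : s = 2 ∨ s = 3)
    (hφ : ∀ i, φ (T i) = if i = s then Polynomial.X else 0)
    (c : Fin 4 → Fin 4 → k) (hc : c s s ≠ 0)
    (r₁ r₂ : MvPolynomial (Fin 3) k)
    (hr₁deg : MvPolynomial.degreeOf 2 r₁ ≤ 2)
    (hr₂deg : MvPolynomial.degreeOf 2 r₂ ≤ 2)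
    (l : Fin 4 → k)
    (h : aeval (fun i : Fin 3 => T (![0, 1, 3] i)) r₂
      - aeval (fun i : Fin 3 => T (![0, 1, 2] i)) r₁
      = (∑ i, l i • T i) * ∑ i : Fin 4, ∑ j : Fin 4, MvPolynomial.C (c i j) * T i * T j) :
    l s = 0 := by
  have h' := congrArg (fun q => (φ q).coeff 3) h
  simp only [map_sub, Polynomial.coeff_sub] at h'
  rw [← AlgHom.comp_apply, ← AlgHom.comp_apply, comp_aeval, comp_aeval,
    aux_deg_s8 r₁ hr₁deg, aux_deg_s8 r₂ hr₂deg] at h'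
  · have hC : ∀ a, φ (C a) = Polynomial.C a := fun a => φ.commutes a
    simp only [map_mul, map_sum, map_smul, hφ, hC] at h'
    have e : (∑ x, l x • (if x = s then (Polynomial.X : Polynomial k) else 0)) *
      (∑ x, ∑ y, Polynomial.C (c x y) * (if x = s then (Polynomial.X : Polynomial k) else 0)
        * (if y = s then Polynomial.X else 0)) = Polynomial.C (l s * c s s) * Polynomial.X ^ 3 := by
      simp [Polynomial.smul_eq_C_mul]
      ring
    rw [e, Polynomial.coeff_C_mul_X_pow] at h'
    simp at h'
    exact h'.resolve_right hc
  all_goals rcases hs with rfl | rfl <;> simp [hφ]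

/-- **Lemma 3.1** (coordinate form): let `T₁, T₂, T₃, T₄` be linear forms of
`k[x₁,x₂,x₃,x₄]` forming a basis of the space of linear forms (indexed here by
`T 0, T 1, T 2, T 3`).  Suppose the quadratic form `Q = ∑ᵢⱼ cᵢⱼ TᵢTⱼ` has nonzero
coefficients of `T₃²` and `T₄²` (i.e. `c 2 2 ≠ 0` and `c 3 3 ≠ 0`).  If
`R₁ ∈ k[T₁,T₂,T₃]` has degree at most `2` in `T₃`, `R₂ ∈ k[T₁,T₂,T₄]` has degree at
most `2` in `T₄`, and `L` is a linear form with `R₂ − R₁ = L·Q`, then `L` lies in the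
`k`-span of `T₁` and `T₂`. -/
theorem linear_form_mem_span (k : Type*) [Field k]
    (T : Fin 4 → MvPolynomial (Fin 4) k)
    (hThom : ∀ i, (T i).IsHomogeneous 1)
    (hTind : LinearIndependent k T)
    (Q : MvPolynomial (Fin 4) k) (c : Fin 4 → Fin 4 → k)
    (hQ : Q = ∑ i : Fin 4, ∑ j : Fin 4, MvPolynomial.C (c i j) * T i * T j)
    (hc33 : c 2 2 ≠ 0) (hc44 : c 3 3 ≠ 0)
    (r₁ r₂ : MvPolynomial (Fin 3) k)
    (hr₁deg : MvPolynomial.degreeOf 2 r₁ ≤ 2)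
    (hr₂deg : MvPolynomial.degreeOf 2 r₂ ≤ 2)
    (R₁ R₂ : MvPolynomial (Fin 4) k)
    (hR₁ : R₁ = MvPolynomial.aeval (fun i : Fin 3 => T (![0, 1, 2] i)) r₁)
    (hR₂ : R₂ = MvPolynomial.aeval (fun i : Fin 3 => T (![0, 1, 3] i)) r₂)
    (L : MvPolynomial (Fin 4) k) (hL : L.IsHomogeneous 1)
    (hLQ : R₂ - R₁ = L * Q) :
    L ∈ Submodule.span k {T 0, T 1} := by
  classical
  subst hQ hR₁ hR₂
  let A : Matrix (Fin 4) (Fin 4) k := fun i j => MvPolynomial.coeff (Finsupp.single j 1) (T i)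
  have hTA : ∀ i, T i = ∑ j, A i j • MvPolynomial.X j := fun i => aux_lin _ (hThom i)
  have hA : IsUnit A := by
    rw [← Matrix.linearIndependent_rows_iff_isUnit]
    have : T = (Fintype.linearCombination k (MvPolynomial.X : Fin 4 → MvPolynomial (Fin 4) k)) ∘ A := by
      funext i
      rw [hTA i]
      rfl
    rw [this] at hTind
    exact hTind.of_comp
  obtain ⟨B, hAB, hBA⟩ : ∃ B, A * B = 1 ∧ B * A = 1 := by
    obtain ⟨u, hu⟩ := hA
    exact ⟨↑u⁻¹, by simp [← hu], by simp [← hu]⟩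
  have hX : ∀ j, (MvPolynomial.X j : MvPolynomial (Fin 4) k) = ∑ i, B j i • T i := by
    intro j
    simp_rw [hTA, Finset.smul_sum, smul_smul]
    rw [Finset.sum_comm]
    simp_rw [← Finset.sum_smul, ← Matrix.mul_apply, hBA, Matrix.one_apply]
    simp
  obtain ⟨l, rfl⟩ : ∃ l : Fin 4 → k, L = ∑ i, l i • T i := by
    refine ⟨fun i => ∑ j, MvPolynomial.coeff (Finsupp.single j 1) L * B j i, ?_⟩
    conv_lhs => rw [aux_lin L hL]
    simp_rw [hX, Finset.smul_sum, smul_smul, Finset.sum_smul]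
    rw [Finset.sum_comm]
  have key : ∀ s : Fin 4, (s = 2 ∨ s = 3) → c s s ≠ 0 → l s = 0 := by
    intro s hs hc
    refine aux_zero T (MvPolynomial.aeval fun j => B j s • Polynomial.X) s hs ?_ c hc r₁ r₂
      hr₁deg hr₂deg l hLQ
    intro i
    rw [hTA]
    simp only [map_sum, map_smul, MvPolynomial.aeval_X, smul_smul]
    rw [← Finset.sum_smul, ← Matrix.mul_apply, hAB, Matrix.one_apply]
    split_ifs <;> simp
  rw [Fin.sum_univ_four, key 2 (Or.inl rfl) hc33, key 3 (Or.inr rfl) hc44, Submodule.mem_span_pair]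
  exact ⟨l 0, l 1, by simp⟩
end
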